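/- arXiv:math/0204143 — 2 statements merged into one kernel-verified Lean document; each statement's English description precedes it below -/
import Mathlib

section
/- For every cardinal number α ≥ 𝔠, there exists a metrizable topological space X with |X| = α such that: for every set Q with |Q| ≤ α and every pair of quasiorders ≤₁, ≤₂ on Q satisfying (q ≤₁ q' implies q ≤₂ q') for all q, q' ∈ Q, there exists a family {X(q) : q ∈ Q} of clopen subsets of X, pairwise non-homeomorphic and each having no isolated points, such that: (1) q ≤₁ q' if and only if X(q) is homeomorphic to a clopen subset of X(q'); (2) if q ≤₂ q', then X(q) is homeomorphic to a closed subset of X(q'); and (3) if ¬(q ≤₂ q'), then there exists no injective continuous map from X(q) into X(q'). -/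
universe u

open Cardinal

/-- `A` is homeomorphic to a clopen subset of `B`. -/
def HomeoToClopenSubset (A : Type*) [TopologicalSpace A]
    (B : Type*) [TopologicalSpace B] : Prop :=
  ∃ t : Set B, IsClopen t ∧ Nonempty (A ≃ₜ t)

/-- `A` is homeomorphic to a closed subset of `B`. -/
def HomeoToClosedSubset (A : Type*) [TopologicalSpace A]
    (B : Type*) [TopologicalSpace B] : Prop :=
  ∃ t : Set B, IsClosed t ∧ Nonempty (A ≃ₜ t)

/-- There exists an injective continuous map from `A` into `B`. -/
def ExistsInjCont (A : Type*) [TopologicalSpace A]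
    (B : Type*) [TopologicalSpace B] : Prop :=
  ∃ f : A → B, Continuous f ∧ Function.Injective f

/-- The representation property of the space `X` for a pair of quasiorders, by clopen
subspaces without isolated points. -/
def RepresentsPairsNoIsolated (α : Cardinal.{u}) (X : Type u) [TopologicalSpace X] : Prop :=
  ∀ (Q : Type u) (le1 le2 : Q → Q → Prop), #Q ≤ α →
    (∀ q, le1 q q) → (∀ a b c, le1 a b → le1 b c → le1 a c) →
    (∀ q, le2 q q) → (∀ a b c, le2 a b → le2 b c → le2 a c) →
    (∀ q q', le1 q q' → le2 q q') →
    ∃ Xq : Q → Set X,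
      (∀ q, IsClopen (Xq q)) ∧
      (∀ q q', q ≠ q' → IsEmpty ((Xq q) ≃ₜ (Xq q'))) ∧
      (∀ q (x : (Xq q)), ¬ IsOpen ({x} : Set (Xq q))) ∧
      (∀ q q', le1 q q' ↔ HomeoToClopenSubset (Xq q) (Xq q')) ∧
      (∀ q q', le2 q q' → HomeoToClosedSubset (Xq q) (Xq q')) ∧
      (∀ q q', ¬ le2 q q' → ¬ ExistsInjCont (Xq q) (Xq q'))


namespace RepQ
open Cardinal Set Topology Filter

lemma diag (T : Type) (hT : #T ≤ 𝔠) (R : T → ℂ → ℂ → Prop) :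
    ∃ (B : Set ℂ) (z : T → ℂ) (act : T → Prop) (S N : T → Set ℂ),
      (∀ t, #(S t) < 𝔠) ∧ (∀ t, #(N t) < 𝔠) ∧ (∀ t, ∀ x ∈ N t, x ∉ B) ∧
      (∀ t, act t → z t ∈ B ∧ ∃ w, w ∉ B ∧ R t (z t) w) ∧
      (∀ t t', act t → act t' → z t = z t' → t = t') ∧
      (∀ t, ¬ act t → ∀ z w, R t z w → z ≠ w → z ∉ N t → z ∉ S t → w ∉ S t → False) := by
  classical
  obtain ⟨_, _, hord⟩ := exists_ord_eq_type_lt T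
  let Sp (t : T) (o : ∀ s, s < t → Option (ℂ × ℂ)) : Set ℂ :=
    {z | ∃ s, ∃ h : s < t, ∃ w, o s h = some (z, w)}
  let Np (t : T) (o : ∀ s, s < t → Option (ℂ × ℂ)) : Set ℂ :=
    {w | ∃ s, ∃ h : s < t, ∃ z, o s h = some (z, w)}
  let good (t : T) (S N : Set ℂ) (p : ℂ × ℂ) : Prop :=
    R t p.1 p.2 ∧ p.1 ≠ p.2 ∧ p.1 ∉ N ∧ p.1 ∉ S ∧ p.2 ∉ S
  let pick (t : T) (S N : Set ℂ) : Option (ℂ × ℂ) :=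
    if h : ∃ p, good t S N p then some h.choose else none
  let o : T → Option (ℂ × ℂ) :=
    (wellFounded_lt (α := T)).fix (fun t o => pick t (Sp t o) (Np t o))
  let S : T → Set ℂ := fun t => {z | ∃ s, s < t ∧ ∃ w, o s = some (z, w)}
  let N : T → Set ℂ := fun t => {w | ∃ s, s < t ∧ ∃ z, o s = some (z, w)}
  have ho : ∀ t, o t = pick t (S t) (N t) := by
    intro t
    have := (wellFounded_lt (α := T)).fix_eq (fun t o => pick t (Sp t o) (Np t o)) t
    refine this.trans ?_
    congr 1
    · ext z; simp [Sp, S, o]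
    · ext z; simp [Np, N, o]
  have hgood : ∀ t p, o t = some p → good t (S t) (N t) p := by
    intro t p h
    rw [ho] at h
    by_cases hh : ∃ p, good t (S t) (N t) p
    · simp only [pick, dif_pos hh, Option.some.injEq] at h
      rw [← h]; exact hh.choose_spec
    · simp only [pick, dif_neg hh, reduceCtorEq] at h
  have hsmall : ∀ (f : ℂ × ℂ → ℂ) t, #{z | ∃ s, s < t ∧ ∃ p, o s = some p ∧ f p = z} < 𝔠 := by
    intro f t
    refine lt_of_le_of_lt ?_ ((mk_Iio_lt t hord).trans_le hT)
    have : {z | ∃ s, s < t ∧ ∃ p, o s = some p ∧ f p = z} ⊆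
        (fun s => f ((o s).getD 0)) '' Iio t := by
      rintro z ⟨s, hs, p, hp, rfl⟩
      exact ⟨s, hs, by simp [hp]⟩
    exact (mk_le_mk_of_subset this).trans mk_image_le
  let B : Set ℂ := {z | ∃ s w, o s = some (z, w)}
  have hNB : ∀ s z w, o s = some (z, w) → w ∉ B := by
    rintro s z w h ⟨s', w', h'⟩
    obtain ⟨g1, g2, g3, g4, g5⟩ := hgood _ _ h
    obtain ⟨k1, k2, k3, k4, k5⟩ := hgood _ _ h'
    rcases lt_trichotomy s s' with hl | rfl | hl
    · exact k3 ⟨s, hl, z, h⟩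
    · rw [h] at h'; simp at h'; exact g2 h'.1
    · exact g5 ⟨s', hl, w', h'⟩
  refine ⟨B, fun t => ((o t).getD 0).1, fun t => ∃ p, o t = some p, S, N, ?_, ?_, ?_, ?_, ?_, ?_⟩
  · intro t
    refine lt_of_le_of_lt (mk_le_mk_of_subset ?_) (hsmall Prod.fst t)
    rintro z ⟨s, hs, w, h⟩; exact ⟨s, hs, _, h, rfl⟩
  · intro t
    refine lt_of_le_of_lt (mk_le_mk_of_subset ?_) (hsmall Prod.snd t)
    rintro z ⟨s, hs, w, h⟩; exact ⟨s, hs, _, h, rfl⟩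
  · rintro t x ⟨s, hs, z, h⟩
    exact hNB _ _ _ h
  · rintro t ⟨⟨z, w⟩, h⟩
    simp only [h, Option.getD_some]
    exact ⟨⟨t, w, h⟩, w, hNB _ _ _ h, (hgood _ _ h).1⟩
  · rintro t t' ⟨⟨z, w⟩, h⟩ ⟨⟨z', w'⟩, h'⟩ he
    simp only [h, h', Option.getD_some] at he
    subst he
    obtain ⟨g1, g2, g3, g4, g5⟩ := hgood _ _ h
    obtain ⟨k1, k2, k3, k4, k5⟩ := hgood _ _ h'
    rcases lt_trichotomy t t' with hl | rfl | hl
    · exact absurd ⟨t, hl, w, h⟩ k4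
    · rfl
    · exact absurd ⟨t', hl, w', h'⟩ g4
  · intro t ht z w h1 h2 h3 h4 h5
    have hh : ∃ p, good t (S t) (N t) p := ⟨(z, w), h1, h2, h3, h4, h5⟩
    exact ht ⟨hh.choose, by rw [ho]; simp only [pick, dif_pos hh]⟩

/-- The rigid subset of the plane. -/
lemma exists_rigid : ∃ B : Set ℂ,
    (∀ K : Set ℂ, IsClosed K → ¬ K.Countable → 𝔠 ≤ #(K ∩ B : Set ℂ)) ∧
    (∀ (O : Set ℂ) (f : ℂ → ℂ), IsOpen O → ContinuousOn f (O ∩ B) → MapsTo f (O ∩ B) B →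
      InjOn f (O ∩ B) → ∀ x ∈ O ∩ B, f x = x) := by
  let T := ((ℕ → ℂ) × ℝ) ⊕ ((ℕ → ℂ) × (ℕ → ℂ) × ℂ × ℝ)
  have hseq : #(ℕ → ℂ) = 𝔠 := by simp
  have hT : #T ≤ 𝔠 := by
    simp [T, mk_real]
  let R : T → ℂ → ℂ → Prop := fun t z w =>
    match t with
    | .inl (D, _) => z ∈ closure (range D)
    | .inr (D, f, c, r) => z ∈ Metric.ball c r ∧ z ∈ closure (range D) ∧
        ∀ ε > 0, ∃ δ > 0, ∀ n, dist (D n) z < δ → dist (f n) w < ε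
  obtain ⟨B, z, act, S, N, hS, hN, hNB, hact, hinj, hnact⟩ := diag T hT R
  have hK : ∀ K : Set ℂ, IsClosed K → ¬ K.Countable → 𝔠 ≤ #(K ∩ B : Set ℂ) := by
    intro K hKc hKu
    have hKcard : 𝔠 ≤ #K := by
      obtain ⟨f, hf, hfc, hfi⟩ := hKc.exists_nat_bool_injection_of_not_countable hKu
      have : #(ℕ → Bool) ≤ #K :=
        mk_le_of_injective (f := fun x => (⟨f x, hf (mem_range_self x)⟩ : K))
          (fun a b h => hfi (congrArg Subtype.val h))
      simpa using this
    have hKne : K.Nonempty := by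
      by_contra h
      rw [not_nonempty_iff_eq_empty] at h
      exact hKu (h ▸ countable_empty)
    obtain ⟨D, hD⟩ : ∃ D : ℕ → ℂ, closure (range D) = K := by
      haveI : Nonempty K := hKne.to_subtype
      refine ⟨fun n => (TopologicalSpace.denseSeq K n : ℂ), ?_⟩
      have h1 := TopologicalSpace.denseRange_denseSeq K
      apply subset_antisymm
      · apply closure_minimal _ hKc
        rintro _ ⟨n, rfl⟩; exact Subtype.coe_prop _
      · intro x hx
        have := h1 ⟨x, hx⟩
        have h2 := (closure_subtype (s := range (TopologicalSpace.denseSeq K))).1 this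
        rwa [← range_comp] at h2
    have hall : ∀ r : ℝ, act (.inl (D, r)) := by
      intro r
      by_contra hna
      have hh := hnact _ hna
      have : ∃ x ∈ K, x ∉ N (.inl (D, r)) ∪ S (.inl (D, r)) := by
        by_contra hcon
        push Not at hcon
        have h1 : #K ≤ #(N (.inl (D, r)) ∪ S (.inl (D, r)) : Set ℂ) := mk_le_mk_of_subset hcon
        have h2 := (mk_union_le (N (.inl (D, r))) (S (.inl (D, r)))).trans_lt
          (add_lt_of_lt aleph0_le_continuum (hN _) (hS _))
        exact absurd (hKcard.trans h1) (not_le.2 h2)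
      obtain ⟨x, hxK, hx⟩ := this
      have : ∃ w, w ∉ S (.inl (D, r)) ∪ {x} := by
        by_contra hcon
        push Not at hcon
        have h1 : #ℂ ≤ #(S (.inl (D, r)) ∪ {x} : Set ℂ) := by
          rw [← mk_univ]; exact mk_le_mk_of_subset (fun w _ => hcon w)
        have h2 := (mk_union_le (S (.inl (D, r))) {x}).trans_lt
          (add_lt_of_lt aleph0_le_continuum (hS _) (by simpa using one_lt_aleph0.trans_le aleph0_le_continuum))
        rw [mk_complex] at h1
        exact absurd h1 (not_le.2 h2)
      obtain ⟨w, hw⟩ := this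
      simp only [mem_union, mem_singleton_iff, not_or] at hx hw
      exact hh x w (by simpa [R, hD] using hxK) (Ne.symm hw.2) hx.1 hx.2 hw.1
    rw [← mk_real]
    refine mk_le_of_injective (f := fun r : ℝ => (⟨z (.inl (D, r)), ?_, (hact _ (hall r)).1⟩ : (K ∩ B : Set ℂ))) ?_
    · obtain ⟨w, -, hw⟩ := (hact _ (hall r)).2
      simpa [R, hD] using hw
    · intro r r' h
      have := hinj _ _ (hall r) (hall r') (congrArg Subtype.val h)
      exact (Prod.mk.inj (Sum.inl.inj this)).2
  refine ⟨B, hK, ?_⟩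
  intro O f hO hfc hfm hfi x hx
  by_contra hne
  have hd : 0 < dist (f x) x := dist_pos.2 hne
  obtain ⟨r1, hr1, hb1⟩ := Metric.isOpen_iff.1 hO x hx.1
  obtain ⟨r2, hr2, hb2⟩ := Metric.continuousOn_iff.1 hfc x hx (dist (f x) x / 2) (by positivity)
  obtain ⟨r, hr0, hrr1, hrr2, hrr3⟩ : ∃ r, 0 < r ∧ r ≤ r1 ∧ r ≤ r2 ∧ r ≤ dist (f x) x / 2 :=
    ⟨min r1 (min r2 (dist (f x) x / 2)), by positivity, by simp, by simp, by simp⟩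
  have hWO : Metric.ball x r ∩ B ⊆ O ∩ B := fun y hy =>
    ⟨hb1 (Metric.ball_subset_ball hrr1 hy.1), hy.2⟩
  have hmove : ∀ y ∈ Metric.ball x r ∩ B, y ≠ f y := by
    intro y hy he
    have h1 := hb2 y (hWO hy) (lt_of_lt_of_le hy.1 hrr2)
    rw [← he] at h1
    have h2 : dist y x < dist (f x) x / 2 := lt_of_lt_of_le hy.1 hrr3
    have := dist_triangle_left (f x) x y
    linarith
  have hWcard : 𝔠 ≤ #(Metric.ball x r ∩ B : Set ℂ) := by
    have h1 := hK (Metric.closedBall x (r/2)) Metric.isClosed_closedBall (by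
      intro hcount
      have h3 := (hcount.mono Metric.ball_subset_closedBall)
      have h4 := continuum_le_cardinal_of_isOpen ℝ (E := ℂ) (s := Metric.ball x (r/2)) Metric.isOpen_ball
        ⟨x, Metric.mem_ball_self (by positivity)⟩
      exact absurd (h4.trans (le_aleph0_iff_set_countable.2 h3)) (not_le.2 aleph0_lt_continuum))
    refine h1.trans (mk_le_mk_of_subset (inter_subset_inter_left _ (Metric.closedBall_subset_ball (by linarith))))
  have hne : (Metric.ball x r ∩ B).Nonempty := ⟨x, Metric.mem_ball_self hr0, hx.2⟩
  haveI : Nonempty ↥(Metric.ball x r ∩ B) := hne.to_subtype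
  let D : ℕ → ℂ := fun n => (TopologicalSpace.denseSeq ↥(Metric.ball x r ∩ B) n : ℂ)
  have hDm : ∀ n, D n ∈ Metric.ball x r ∩ B := fun n => Subtype.coe_prop _
  have hDd : ∀ y ∈ Metric.ball x r ∩ B, y ∈ closure (range D) := by
    intro y hy
    have h1 := TopologicalSpace.denseRange_denseSeq ↥(Metric.ball x r ∩ B) ⟨y, hy⟩
    have h2 := (closure_subtype (s := range (TopologicalSpace.denseSeq _))).1 h1
    rwa [← range_comp] at h2
  let t : T := .inr (D, fun n => f (D n), x, r)
  have hlim : ∀ y ∈ Metric.ball x r ∩ B, ∀ ε > 0, ∃ δ > 0, ∀ n, dist (D n) y < δ → dist (f (D n)) (f y) < ε := by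
    intro y hy ε hε
    obtain ⟨δ, hδ, h⟩ := Metric.continuousOn_iff.1 hfc y (hWO hy) ε hε
    exact ⟨δ, hδ, fun n hn => h _ (hWO (hDm n)) hn⟩
  by_cases ha : act t
  · obtain ⟨hzB, w, hwB, hzW, hzcl, hzl⟩ := hact t ha
    have hzz : z t ∈ Metric.ball x r ∩ B := ⟨hzW, hzB⟩
    apply hwB
    have : w = f (z t) := by
      by_contra hcon
      have hpos : 0 < dist w (f (z t)) := dist_pos.2 hcon
      obtain ⟨δ1, hδ1, h1⟩ := hzl (dist w (f (z t)) / 2) (by positivity)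
      obtain ⟨δ2, hδ2, h2⟩ := hlim _ hzz (dist w (f (z t)) / 2) (by positivity)
      obtain ⟨_, ⟨n, rfl⟩, hn⟩ := Metric.mem_closure_iff.1 hzcl (min δ1 δ2) (by positivity)
      rw [dist_comm] at hn
      have h3 := h1 n (hn.trans_le (min_le_left _ _))
      have h4 := h2 n (hn.trans_le (min_le_right _ _))
      have := dist_triangle_left w (f (z t)) (f (D n))
      linarith
    rw [this]
    exact hfm (hWO hzz)
  · have hh := hnact t ha
    have : ∃ y ∈ Metric.ball x r ∩ B, y ∉ S t ∧ f y ∉ S t := by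
      by_contra hcon
      push Not at hcon
      have h1 : #(Metric.ball x r ∩ B : Set ℂ) ≤ #(S t) + #(S t) := by
        have hsub : (Metric.ball x r ∩ B : Set ℂ) ⊆ S t ∪ {y ∈ Metric.ball x r ∩ B | f y ∈ S t} := by
          intro y hy
          by_cases hyS : y ∈ S t
          · exact Or.inl hyS
          · exact Or.inr ⟨hy, hcon y hy hyS⟩
        refine (mk_le_mk_of_subset hsub).trans ((mk_union_le _ _).trans (add_le_add le_rfl ?_))
        refine mk_le_of_injective (f := fun y : {y ∈ Metric.ball x r ∩ B | f y ∈ S t} => (⟨f y, y.2.2⟩ : S t)) ?_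
        intro a b hab
        exact Subtype.ext (hfi (hWO a.2.1) (hWO b.2.1) (congrArg Subtype.val hab))
      exact absurd (hWcard.trans h1) (not_le.2 (add_lt_of_lt aleph0_le_continuum (hS t) (hS t)))
    obtain ⟨y, hy, hyS, hfy⟩ := this
    exact hh y (f y) ⟨hy.1, hDd y hy, hlim y hy⟩ (hmove y hy) (fun h => hNB t y h hy.2) hyS hfy

lemma rigid_conn {B : Set ℂ}
    (hK : ∀ K : Set ℂ, IsClosed K → ¬ K.Countable → 𝔠 ≤ #(K ∩ B : Set ℂ))
    (D : Set ℂ) (hD : D.Countable) : IsPreconnected (B \ D) := by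
  have hunc : ∀ K : Set ℂ, IsClosed K → ¬ K.Countable → ∃ x ∈ K, x ∈ B \ D := by
    intro K h1 h2
    by_contra hcon
    push Not at hcon
    have hsub : K ∩ B ⊆ D := by
      intro x hx
      by_contra hxD
      exact hcon x hx.1 ⟨hx.2, hxD⟩
    have := (hK K h1 h2).trans (mk_le_mk_of_subset hsub)
    exact absurd (this.trans (le_aleph0_iff_set_countable.2 hD)) (not_le.2 aleph0_lt_continuum)
  intro U V hU hV hUV ⟨a, ha, haU⟩ ⟨b, hb, hbV⟩
  by_contra hcon
  have hdisj : U ∩ V = ∅ := by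
    by_contra hne
    obtain ⟨x, hx⟩ := nonempty_iff_ne_empty.2 hne
    obtain ⟨r, hr, hball⟩ := Metric.isOpen_iff.1 (hU.inter hV) x hx
    obtain ⟨y, hy, hyB⟩ := hunc (Metric.closedBall x (r/2)) Metric.isClosed_closedBall (by
      intro hcount
      have h3 := (hcount.mono Metric.ball_subset_closedBall)
      have h4 := continuum_le_cardinal_of_isOpen ℝ (E := ℂ) (s := Metric.ball x (r/2)) Metric.isOpen_ball
        ⟨x, Metric.mem_ball_self (by positivity)⟩
      exact absurd (h4.trans (le_aleph0_iff_set_countable.2 h3)) (not_le.2 aleph0_lt_continuum))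
    exact hcon ⟨y, hyB, hball (Metric.closedBall_subset_ball (by linarith) hy)⟩
  have hcount : (U ∪ V)ᶜ.Countable := by
    by_contra hnc
    obtain ⟨y, hy, hyB⟩ := hunc _ (hU.union hV).isClosed_compl hnc
    exact hy (hUV hyB)
  have hc := hcount.isConnected_compl_of_one_lt_rank (E := ℂ) (by
    rw [Complex.rank_real_complex]; norm_num)
  rw [compl_compl] at hc
  obtain ⟨x, -, hx⟩ := hc.isPreconnected U V hU hV subset_rfl ⟨a, Or.inl haU, haU⟩ ⟨b, Or.inr hbV, hbV⟩
  rw [hdisj] at hx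
  exact hx

/-- points with mutual distance at least one -/
lemma rigid_points {B : Set ℂ}
    (hK : ∀ K : Set ℂ, IsClosed K → ¬ K.Countable → 𝔠 ≤ #(K ∩ B : Set ℂ)) :
    ∃ p : ℕ → B, ∀ i j, i ≠ j → 1 ≤ dist (p i) (p j) := by
  have : ∀ n : ℕ, ∃ x : B, dist (x : ℂ) (3 * n : ℂ) ≤ 1 := by
    intro n
    have h := hK (Metric.closedBall (3 * n : ℂ) 1) Metric.isClosed_closedBall (by
      intro hcount
      have h3 := (hcount.mono Metric.ball_subset_closedBall)
      have h4 := continuum_le_cardinal_of_isOpen ℝ (E := ℂ) (s := Metric.ball (3 * n : ℂ) 1) Metric.isOpen_ball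
        ⟨_, Metric.mem_ball_self (by positivity)⟩
      exact absurd (h4.trans (le_aleph0_iff_set_countable.2 h3)) (not_le.2 aleph0_lt_continuum))
    have hne : Nonempty ↥(Metric.closedBall (3 * n : ℂ) 1 ∩ B) := by
      rw [← mk_ne_zero_iff]
      intro h0
      rw [h0] at h
      exact absurd h (not_le.2 continuum_pos)
    obtain ⟨x, hx, hxB⟩ := hne
    exact ⟨⟨x, hxB⟩, hx⟩
  choose p hp using this
  refine ⟨p, fun i j hij => ?_⟩
  have h1 := hp i
  rw [dist_comm] at h1
  have h2 := hp j
  have h3 : (3:ℝ) ≤ dist (3 * i : ℂ) (3 * j : ℂ) := by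
    rw [dist_eq_norm, ← mul_sub, norm_mul]
    have : (1:ℝ) ≤ ‖(i:ℂ) - j‖ := by
      have h : ((i:ℂ) - j) = (((i:ℤ) - j : ℤ) : ℂ) := by push_cast; rfl
      rw [h, Complex.norm_intCast]
      have : (1:ℤ) ≤ |(i:ℤ) - j| := Int.one_le_abs (by omega)
      exact_mod_cast this
    simp; linarith
  have h4 := dist_triangle4 (3 * i : ℂ) (p i : ℂ) (p j : ℂ) (3 * j : ℂ)
  rw [Subtype.dist_eq]
  linarith

end RepQ


namespace RepQ
open Cardinal Set Topology Filter

section Comb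
variable {V : Type*} [LinearOrder V] [WellFoundedLT V] [BoundedOrder V]

/-- first type of edges -/
def t1 (x y : V) : ℕ → V := fun j => if j = 2 then y else x
/-- second type of edges -/
def t2 (x y : V) : ℕ → V := fun j => if j = 1 ∨ j = 2 then y else x
/-- third type of edges -/
def t3 (l : V) (c : ℕ → V) : ℕ → V :=
  fun j => if j = 1 ∨ j = 2 then l else if j = 0 then c 0 else c (j - 3)

/-- the chosen ladder -/
def Lad (l : V) (c : ℕ → V) : Prop :=
  ∃ h : ∃ c : ℕ → V, StrictMono c ∧ IsLUB (range c) l, c = h.choose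

lemma Lad.uniq {l : V} {c c' : ℕ → V} (h : Lad l c) (h' : Lad l c') : c = c' := by
  obtain ⟨h1, rfl⟩ := h; obtain ⟨h2, rfl⟩ := h'; rfl

lemma Lad.spec {l : V} {c : ℕ → V} (h : Lad l c) : StrictMono c ∧ IsLUB (range c) l := by
  obtain ⟨h1, rfl⟩ := h; exact h1.choose_spec

/-- the edges -/
def Ed (m : V) : Set (ℕ → V) :=
  {e | (∃ x y, x < y ∧ e = t1 x y) ∨ (∃ x y, x < y ∧ e = t2 x y) ∨
    (∃ l c, Lad l c ∧ e = t3 l c) ∨ e = fun _ => m}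

lemma comb_aux (hV : ∀ x : V, x < ⊤ → ∃ y, x < y ∧ y < ⊤) {m m' : V} (hm0 : ⊥ < m) (hm1 : m < ⊤)
    (τ : (ℕ → V) → (ℕ → V)) (hτ : MapsTo τ (Ed m) (Ed m'))
    (H : ∀ e ∈ Ed m, ∀ e' ∈ Ed m, ∀ j, e j = e' j ↔ τ e j = τ e' j) :
    ∃ γ : V → V, StrictMono γ ∧ (∀ x y, x < y → τ (t1 x y) = t1 (γ x) (γ y)) ∧
      (∀ x y, x < y → τ (t2 x y) = t2 (γ x) (γ y)) ∧
      (∀ l c, Lad l c → τ (t3 l c) = t3 (γ l) (γ ∘ c) ∧ Lad (γ l) (γ ∘ c)) ∧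
      (τ (fun _ => m) = fun _ => γ m) ∧ m' = γ m := by
  have m1 : ∀ x y : V, x < y → t1 x y ∈ Ed m := fun x y h => Or.inl ⟨x, y, h, rfl⟩
  have m2 : ∀ x y : V, x < y → t2 x y ∈ Ed m := fun x y h => Or.inr (Or.inl ⟨x, y, h, rfl⟩)
  have m3 : ∀ (l : V) c, Lad l c → t3 l c ∈ Ed m :=
    fun x y h => Or.inr (Or.inr (Or.inl ⟨x, y, h, rfl⟩))
  have m4 : (fun _ => m) ∈ Ed m := Or.inr (Or.inr (Or.inr rfl))
  have hbt : (⊥ : V) < ⊤ := hm0.trans hm1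
  -- step one: t1 edges
  have s1 : ∀ x y : V, x < y → ∀ j, j ≠ 2 → τ (t1 x y) j = τ (t1 x ⊤) 0 := by
    intro x y hxy j hj
    have hx : x < ⊤ := hxy.trans_le le_top
    obtain ⟨y', hy1, hy2⟩ := hV x hx
    have key : ∃ z, x < z ∧ τ (t1 x z) 2 ≠ τ (t1 x z) 1 := by
      by_contra hcon
      push Not at hcon
      have a1 := hcon y' hy1
      have a2 := hcon ⊤ hx
      have a3 : τ (t1 x y') 1 = τ (t1 x ⊤) 1 := (H _ (m1 _ _ hy1) _ (m1 _ _ hx) 1).1 (by simp [t1])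
      have a4 := (H _ (m1 _ _ hy1) _ (m1 _ _ hx) 2).2 (by rw [a1, a2, a3])
      simp [t1] at a4
      exact hy2.ne a4
    obtain ⟨z, hz, hne⟩ := key
    have e1 : ∀ w i, x < w → i ≠ 2 → τ (t1 x w) i = τ (t1 x z) i := fun w i hw hi =>
      (H _ (m1 _ _ hw) _ (m1 _ _ hz) i).1 (by simp [t1, hi])
    rw [e1 y j hxy hj, e1 ⊤ 0 hx (by simp)]
    rcases hτ (m1 _ _ hz) with ⟨a, b, hab, h⟩ | ⟨a, b, hab, h⟩ | ⟨a, b, hab, h⟩ | h <;> rw [h] at hne ⊢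
    · simp [t1, hj]
    · simp [t2] at hne
    · simp [t3] at hne
  have s1' : ∀ x y z : V, x < y → z < y → τ (t1 x y) 2 = τ (t1 z y) 2 := fun x y z h h' =>
      (H _ (m1 _ _ h) _ (m1 _ _ h') 2).1 (by simp [t1])
  -- step two : t2 edges
  have s2 : ∀ x y : V, x < y → τ (t2 x y) = t2 (τ (t1 x ⊤) 0) (τ (t1 x y) 2) ∧
      τ (t1 x ⊤) 0 < τ (t1 x y) 2 ∧ (y < ⊤ → τ (t1 y ⊤) 0 = τ (t1 x y) 2) := by
    intro x y hxy
    have hx : x < ⊤ := hxy.trans_le le_top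
    have b0 : ∀ j, j ≠ 1 → j ≠ 2 → τ (t2 x y) j = τ (t1 x ⊤) 0 := by
      intro j h1 h2
      rw [← s1 x ⊤ hx j h2]
      exact (H _ (m2 _ _ hxy) _ (m1 _ _ hx) j).1 (by simp [t1, t2, h1, h2])
    have b2 : τ (t2 x y) 2 = τ (t1 x y) 2 :=
      (H _ (m2 _ _ hxy) _ (m1 _ _ hxy) 2).1 (by simp [t1, t2])
    have b1 : τ (t2 x y) 1 ≠ τ (t1 x ⊤) 0 := by
      rw [← s1 x ⊤ hx 1 (by simp)]
      intro h
      have := (H _ (m2 _ _ hxy) _ (m1 _ _ hx) 1).2 h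
      simp [t1, t2] at this
      exact hxy.ne' this
    have b3 : τ (t2 x y) 1 = τ (t2 x y) 2 ∧ τ (t2 x y) 0 < τ (t2 x y) 2 := by
      have c1 := b0 0 (by simp) (by simp)
      have c2 := b0 3 (by simp) (by simp)
      have c3 := b0 4 (by simp) (by simp)
      rw [← c1] at b1
      rw [← c2] at c3
      rcases hτ (m2 _ _ hxy) with ⟨a, b, hab, h⟩ | ⟨a, b, hab, h⟩ | ⟨a, b, hab, h⟩ | h <;>
        rw [h] at b1 c3 ⊢
      · simp [t1] at b1
      · simpa [t2] using hab
      · simp [t3] at c3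
        exact absurd (hab.spec.1.injective c3) (by simp)
      · simp at b1
    refine ⟨?_, ?_, ?_⟩
    · funext j
      by_cases h1 : j = 1
      · subst h1; rw [b3.1, b2]; simp [t2]
      by_cases h2 : j = 2
      · subst h2; rw [b2]; simp [t2]
      · rw [b0 j h1 h2]; simp [t2, h1, h2]
    · rw [← b2, ← b0 0 (by simp) (by simp)]; exact b3.2
    · intro hy
      rw [← b2, ← b3.1, ← s1 y ⊤ hy 1 (by simp)]
      exact (H _ (m1 _ _ hy) _ (m2 _ _ hxy) 1).1 (by simp [t1, t2])
  classical
  obtain ⟨γ, hγ0, hγ1⟩ : ∃ γ : V → V, (∀ x < ⊤, γ x = τ (t1 x ⊤) 0) ∧ γ ⊤ = τ (t1 ⊥ ⊤) 2 :=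
    ⟨fun x => if x < ⊤ then τ (t1 x ⊤) 0 else τ (t1 ⊥ ⊤) 2, fun x hx => if_pos hx,
      if_neg (lt_irrefl _)⟩
  have hγ2 : ∀ x y, x < y → τ (t1 x y) 2 = γ y := by
    intro x y hxy
    rcases (le_top : y ≤ ⊤).lt_or_eq with hy | rfl
    · rw [hγ0 y hy, (s2 x y hxy).2.2 hy]
    · rw [hγ1]; exact s1' _ _ _ hxy hbt
  have hmono : StrictMono γ := by
    intro x y hxy
    rw [hγ0 x (hxy.trans_le le_top), ← hγ2 x y hxy]
    exact (s2 x y hxy).2.1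
  have r1 : ∀ x y, x < y → τ (t1 x y) = t1 (γ x) (γ y) := by
    intro x y hxy
    funext j
    by_cases h2 : j = 2
    · subst h2; rw [hγ2 x y hxy]; simp [t1]
    · rw [s1 x y hxy j h2, hγ0 x (hxy.trans_le le_top)]; simp [t1, h2]
  have r2 : ∀ x y, x < y → τ (t2 x y) = t2 (γ x) (γ y) := by
    intro x y hxy
    rw [(s2 x y hxy).1, hγ2 x y hxy, hγ0 x (hxy.trans_le le_top)]
  -- coordinates
  have q0 : ∀ e ∈ Ed m, ∀ j, j ≠ 2 → e j < ⊤ → τ e j = γ (e j) := by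
    intro e he j hj h
    have : τ e j = τ (t1 (e j) ⊤) j := (H _ he _ (m1 _ _ h) j).1 (by simp [t1, hj])
    rw [this, r1 _ _ h]; simp [t1, hj]
  have q1 : ∀ e ∈ Ed m, ∀ j, j = 1 ∨ j = 2 → ⊥ < e j → τ e j = γ (e j) := by
    intro e he j hj h
    have : τ e j = τ (t2 ⊥ (e j)) j := (H _ he _ (m2 _ _ h) j).1 (by simp [t2, hj])
    rw [this, r2 _ _ h]; simp [t2, hj]
  refine ⟨γ, hmono, r1, r2, ?_, ?_⟩
  · intro l c hc
    obtain ⟨hs, hl⟩ := hc.spec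
    have hlt : ∀ n, c n < l := fun n => (hs (Nat.lt_succ_self n)).trans_le (hl.1 ⟨n + 1, rfl⟩)
    have heq : τ (t3 l c) = t3 (γ l) (γ ∘ c) := by
      funext j
      by_cases h12 : j = 1 ∨ j = 2
      · have := q1 _ (m3 l c hc) j h12 (by simp only [t3, h12, if_true]; exact bot_le.trans_lt (hlt 0))
        rw [this]; simp [t3, h12]
      · have := q0 _ (m3 l c hc) j (by tauto) (by
          simp only [t3, h12, if_false]; split_ifs <;> exact (hlt _).trans_le le_top)
        rw [this]; simp only [t3, h12, if_false]; split_ifs <;> rfl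
    refine ⟨heq, ?_⟩
    have h34 : τ (t3 l c) 3 ≠ τ (t3 l c) 4 := by
      rw [heq]; simp [t3]
      intro h; exact absurd (hs.injective (hmono.injective h)) (by simp)
    rcases hτ (m3 _ _ hc) with ⟨a, b, hab, h⟩ | ⟨a, b, hab, h⟩ | ⟨a, b, hab, h⟩ | h
    · rw [h] at h34; simp [t1] at h34
    · rw [h] at h34; simp [t2] at h34
    · rw [heq] at h
      have e1 : γ l = a := by have := congrFun h 1; simpa [t3] using this
      have e2 : γ ∘ c = b := by
        funext n
        have := congrFun h (n + 3)
        simpa [t3] using this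
      rw [e1, e2]; exact hab
    · rw [h] at h34; simp at h34
  · have heq : τ (fun _ => m) = fun _ => γ m := by
      funext j
      by_cases h2 : j = 2
      · exact q1 _ m4 j (Or.inr h2) hm0
      · exact q0 _ m4 j h2 hm1
    refine ⟨heq, ?_⟩
    rcases hτ m4 with ⟨a, b, hab, h⟩ | ⟨a, b, hab, h⟩ | ⟨a, b, hab, h⟩ | h <;> rw [heq] at h
    · have e1 := congrFun h 0
      have e2 := congrFun h 2
      simp [t1] at e1 e2
      exact absurd (e1.symm.trans e2) hab.ne
    · have e1 := congrFun h 0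
      have e2 := congrFun h 2
      simp [t2] at e1 e2
      exact absurd (e1.symm.trans e2) hab.ne
    · have e1 := congrFun h 3
      have e2 := congrFun h 4
      simp [t3] at e1 e2
      exact absurd (hab.spec.1.injective (e1.symm.trans e2)) (by simp)
    · exact (congrFun h 0).symm

lemma comb (hV : ∀ x : V, x < ⊤ → ∃ y, x < y ∧ y < ⊤) {m m' : V} (hm0 : ⊥ < m) (hm1 : m < ⊤)
    (τ : (ℕ → V) → (ℕ → V)) (hτ : MapsTo τ (Ed m) (Ed m'))
    (H : ∀ e ∈ Ed m, ∀ e' ∈ Ed m, ∀ j, e j = e' j ↔ τ e j = τ e' j) :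
    m' = m ∧ ∀ e ∈ Ed m, τ e = e := by
  obtain ⟨γ, hγ, h1, h2, h3, h4, h5⟩ := comb_aux hV hm0 hm1 τ hτ H
  have hid : ∀ x, γ x = x := by
    by_contra hcon
    push Not at hcon
    obtain ⟨x, hx⟩ := hcon
    have hlt : x < γ x := lt_of_le_of_ne hγ.le_apply hx.symm
    have hs : StrictMono fun n => γ^[n] x := hγ.strictMono_iterate_of_lt_map hlt
    have hne : (upperBounds (range fun n => γ^[n] x)).Nonempty := ⟨⊤, fun _ _ => le_top⟩
    let l := wellFounded_lt.min (upperBounds (range fun n => γ^[n] x)) hne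
    have hl : IsLUB (range fun n => γ^[n] x) l :=
      ⟨wellFounded_lt.min_mem _ hne, fun b hb => not_lt.1 (wellFounded_lt.not_lt_min _ hb)⟩
    obtain ⟨c, hc⟩ : ∃ c, Lad l c := ⟨_, ⟨_, hs, hl⟩, rfl⟩
    obtain ⟨-, hc'⟩ := h3 l c hc
    obtain ⟨cs, cl⟩ := hc.spec
    have hup : ∀ n, ∃ k, c n < γ^[k] x := by
      intro n
      have : c n < l := (cs (Nat.lt_succ_self n)).trans_le (cl.1 ⟨n + 1, rfl⟩)
      obtain ⟨_, ⟨k, rfl⟩, hk⟩ := (lt_isLUB_iff hl).1 this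
      exact ⟨k, hk⟩
    have hgl : γ l = l := by
      refine le_antisymm ?_ hγ.le_apply
      refine hc'.spec.2.2 ?_
      rintro _ ⟨n, rfl⟩
      obtain ⟨k, hk⟩ := hup n
      have : γ (c n) < γ^[k+1] x := by
        rw [Function.iterate_succ_apply']; exact hγ hk
      exact this.le.trans (hl.1 ⟨k + 1, rfl⟩)
    rw [hgl] at hc'
    have hgc := hc'.uniq hc
    have hx0 : x < l := hlt.trans_le (hl.1 ⟨1, rfl⟩)
    obtain ⟨_, ⟨n, rfl⟩, hn⟩ := (lt_isLUB_iff cl).1 hx0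
    have hall : ∀ k, γ^[k] x < c n := by
      intro k
      induction k with
      | zero => exact hn
      | succ k ih =>
        rw [Function.iterate_succ_apply', ← congrFun hgc n]
        exact hγ ih
    obtain ⟨k, hk⟩ := hup n
    exact lt_asymm hk (hall k)
  refine ⟨by rw [h5, hid], ?_⟩
  have hid' : γ = id := funext hid
  subst hid'
  rintro e (⟨a, b, hab, rfl⟩ | ⟨a, b, hab, rfl⟩ | ⟨a, b, hab, rfl⟩ | rfl)
  · exact h1 _ _ hab
  · exact h2 _ _ hab
  · exact (h3 _ _ hab).1
  · exact h4

end Comb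
end RepQ


namespace RepQ
open Cardinal Set Topology Filter

lemma conn_comb {V : Type*} [LinearOrder V] [WellFoundedLT V] [BoundedOrder V] {m : V}
    (hm0 : ⊥ < m) (hm1 : m < ⊤) {Z : Type*} (φ : (ℕ → V) → Z)
    (h : ∀ e ∈ Ed m, ∀ e' ∈ Ed m, ∀ j, e j = e' j → φ e = φ e') :
    ∀ e ∈ Ed m, φ e = φ (t1 ⊥ ⊤) := by
  have hbt : (⊥ : V) < ⊤ := hm0.trans hm1
  have m1 : ∀ x y : V, x < y → t1 x y ∈ Ed m := fun x y h => Or.inl ⟨x, y, h, rfl⟩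
  have a1 : ∀ x : V, x < ⊤ → φ (t1 x ⊤) = φ (t1 ⊥ ⊤) := fun x hx =>
    h _ (m1 _ _ hx) _ (m1 _ _ hbt) 2 (by simp [t1])
  have a2 : ∀ e ∈ Ed m, e 0 < ⊤ → φ e = φ (t1 ⊥ ⊤) := by
    intro e he h0
    rw [← a1 _ h0]
    exact h _ he _ (m1 _ _ h0) 0 (by simp [t1])
  intro e he
  apply a2 e he
  rcases he with ⟨a, b, hab, rfl⟩ | ⟨a, b, hab, rfl⟩ | ⟨a, b, hab, rfl⟩ | rfl
  · simpa [t1] using hab.trans_le le_top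
  · simpa [t2] using hab.trans_le le_top
  · simpa [t3] using (hab.spec.1 (Nat.lt_succ_self 0)).trans_le le_top
  · exact hm1

lemma card_Ed {V : Type u} [LinearOrder V] [WellFoundedLT V] [BoundedOrder V] (m : V)
    (α : Cardinal.{u}) (hα : ℵ₀ ≤ α) (hV : #V ≤ α) : #(Ed m) ≤ α := by
  classical
  have hsub : Ed m ⊆ range (fun q : V × V => t1 q.1 q.2) ∪ range (fun q : V × V => t2 q.1 q.2) ∪
      range (fun l : V => t3 l (if h : ∃ c, Lad l c then h.choose else fun _ => l)) ∪
      {fun _ => m} := by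
    rintro e (⟨a, b, hab, rfl⟩ | ⟨a, b, hab, rfl⟩ | ⟨a, b, hab, rfl⟩ | rfl)
    · exact Or.inl (Or.inl (Or.inl ⟨(a, b), rfl⟩))
    · exact Or.inl (Or.inl (Or.inr ⟨(a, b), rfl⟩))
    · refine Or.inl (Or.inr ⟨a, ?_⟩)
      have h : ∃ c, Lad a c := ⟨b, hab⟩
      simp only [dif_pos h]
      rw [h.choose_spec.uniq hab]
    · exact Or.inr rfl
  have h2 : #(V × V) ≤ α := by
    rw [mk_prod, lift_id]
    exact (mul_le_mul' hV hV).trans (mul_eq_self hα).le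
  refine (mk_le_mk_of_subset hsub).trans ?_
  refine (mk_union_le _ _).trans (add_le_of_le hα ?_ ((by simp : #({fun _ => m} : Set (ℕ → V)) ≤ 1).trans (one_le_aleph0.trans hα)))
  refine (mk_union_le _ _).trans (add_le_of_le hα ?_ (mk_range_le.trans hV))
  exact (mk_union_le _ _).trans (add_le_of_le hα (mk_range_le.trans h2) (mk_range_le.trans h2))

/-- the ambient interface -/
structure Amb (B : Set ℂ) (p : ℕ → B) (V : Type u) (M : Type u) [TopologicalSpace M] where
  F : (ℕ → V) → B → M
  pr : M → B
  uu : (ℕ → V) → M → ℝ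
  vv : ℕ → V → M → ℝ
  cpr : Continuous pr
  cF : ∀ e, Continuous (F e)
  cu : ∀ e, Continuous (uu e)
  cv : ∀ j a, Continuous (vv j a)
  hpr : ∀ e b, pr (F e b) = b
  hF : ∀ e e' j, e j = e' j → F e (p j) = F e' (p j)
  hu : ∀ e e' b, uu e (F e' b) ≠ 0 ↔ e = e' ∧ b ∉ range p
  hv : ∀ j a e b, vv j a (F e b) ≠ 0 ↔ e j = a ∧ dist b (p j) < 1

lemma exists_amb {B : Set ℂ} (p : ℕ → B) (hp : ∀ i j, i ≠ j → 1 ≤ dist (p i) (p j)) (V : Type u) :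
    ∃ (M : Type u) (_ : TopologicalSpace M), TopologicalSpace.MetrizableSpace M ∧
      Nonempty (Amb B p V M) := by
  classical
  have hcl : IsClosed (range p) := by
    apply Metric.isClosed_of_pairwise_le_dist (ε := 1) one_pos
    rintro _ ⟨i, rfl⟩ _ ⟨j, rfl⟩ hij
    exact hp i j (fun h => hij (h ▸ rfl))
  let L1 := lp (fun _ : V => ℝ) ⊤
  let L2 := lp (fun _ : (ℕ → V) => ℝ) ⊤
  have ev1 : ∀ a : V, Continuous (fun x : L1 => x a) := fun a =>
    (lp.evalCLM ℝ (fun _ : V => ℝ) ⊤ a).continuous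
  have ev2 : ∀ a : ℕ → V, Continuous (fun x : L2 => x a) := fun a =>
    (lp.evalCLM ℝ (fun _ : (ℕ → V) => ℝ) ⊤ a).continuous
  let M := B × (ℕ → L1) × L2
  let bump : ℕ → B → ℝ := fun j b => max 0 (1 - dist b (p j))
  have hbump : ∀ j b, bump j b ≠ 0 ↔ dist b (p j) < 1 := by
    intro j b
    simp only [bump]
    constructor
    · intro h
      by_contra hc
      exact h (max_eq_left (by linarith))
    · intro h
      rw [max_eq_right (by linarith)]
      linarith
  have cb : ∀ j, Continuous (bump j) := fun j => by fun_prop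
  let F : (ℕ → V) → B → M := fun e b =>
    (b, fun j => lp.single ⊤ (e j) (bump j b), lp.single ⊤ e (Metric.infDist b (range p)))
  refine ⟨M, inferInstance, inferInstance, ⟨⟨F, Prod.fst, fun e y => y.2.2 e,
    fun j a y => y.2.1 j a, continuous_fst, ?_, ?_, ?_, fun _ _ => rfl, ?_, ?_, ?_⟩⟩⟩
  · intro e
    refine continuous_id.prodMk (Continuous.prodMk (continuous_pi fun j => ?_) ?_)
    · exact (lp.isometry_single (E := fun _ : V => ℝ) (p := ⊤) (e j)).continuous.comp (cb j)
    · exact (lp.isometry_single (E := fun _ : (ℕ → V) => ℝ) (p := ⊤) e).continuous.comp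
        (Metric.continuous_infDist_pt _)
  · intro e; exact (ev2 e).comp (continuous_snd.comp continuous_snd)
  · intro j a
    exact (ev1 a).comp ((continuous_apply j).comp (continuous_fst.comp continuous_snd))
  · intro e e' j hj
    have h0 : Metric.infDist (p j) (range p) = 0 := Metric.infDist_zero_of_mem ⟨j, rfl⟩
    simp only [F, h0, lp.single_zero]
    congr 2
    funext i
    by_cases hi : i = j
    · subst hi; rw [hj]
    · have : bump i (p j) = 0 := by
        by_contra hne
        have h1 := (hbump i (p j)).1 hne
        exact absurd (hp j i (Ne.symm hi)) (not_le.2 h1)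
      rw [this, lp.single_zero, lp.single_zero]
  · intro e e' b
    have hi : Metric.infDist b (range p) ≠ 0 ↔ b ∉ range p := by
      rw [Ne, ← hcl.mem_iff_infDist_zero (range_nonempty p)]
    by_cases h : e = e'
    · subst h
      simp only [F, lp.single_apply_self, true_and]
      exact hi
    · simp only [F, lp.single_apply_ne _ _ _ h, h, false_and, ne_eq, not_true]
  · intro j a e b
    by_cases h : e j = a
    · subst h
      simp only [F, lp.single_apply_self, true_and]
      exact hbump j b
    · simp only [F, lp.single_apply_ne _ _ _ (Ne.symm h), h, false_and, ne_eq, not_true]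

section
variable {B : Set ℂ} {p : ℕ → B} {V M : Type u} [TopologicalSpace M]

lemma Amb.inj (A : Amb B p V M) {e e' : ℕ → V} {b b' : B} (h : A.F e b = A.F e' b') : b = b' := by
  have := congrArg A.pr h
  rwa [A.hpr, A.hpr] at this

lemma Amb.iff_vertex (A : Amb B p V M) (e e' : ℕ → V) (j : ℕ) :
    A.F e (p j) = A.F e' (p j) ↔ e j = e' j := by
  refine ⟨fun h => ?_, A.hF e e' j⟩
  have h1 := (A.hv j (e j) e (p j)).2 ⟨rfl, by simp⟩
  rw [h] at h1
  exact ((A.hv j (e j) e' (p j)).1 h1).1.symm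

lemma dense_compl (hK : ∀ K : Set ℂ, IsClosed K → ¬ K.Countable → 𝔠 ≤ #(K ∩ B : Set ℂ))
    (D : Set B) (hD : D.Countable) : Dense Dᶜ := by
  rw [Metric.dense_iff]
  intro b r hr
  by_contra hcon
  rw [not_nonempty_iff_eq_empty] at hcon
  have h := hK (Metric.closedBall (b : ℂ) (r / 2)) Metric.isClosed_closedBall (by
    intro hcount
    have h3 := (hcount.mono Metric.ball_subset_closedBall)
    have h4 := continuum_le_cardinal_of_isOpen ℝ (E := ℂ) (s := Metric.ball (b : ℂ) (r / 2))
      Metric.isOpen_ball ⟨_, Metric.mem_ball_self (by positivity)⟩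
    exact absurd (h4.trans (le_aleph0_iff_set_countable.2 h3)) (not_le.2 aleph0_lt_continuum))
  have hsub : Metric.closedBall (b : ℂ) (r / 2) ∩ B ⊆ (Subtype.val '' D) := by
    rintro x ⟨hx, hxB⟩
    by_contra hxD
    have : (⟨x, hxB⟩ : B) ∈ Metric.ball b r ∩ Dᶜ := by
      refine ⟨?_, fun h => hxD ⟨_, h, rfl⟩⟩
      rw [Metric.mem_ball, Subtype.dist_eq]
      exact lt_of_le_of_lt hx (by linarith)
    rw [hcon] at this
    exact this
  exact absurd (h.trans ((mk_le_mk_of_subset hsub).trans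
    (le_aleph0_iff_set_countable.2 (hD.image _)))) (not_le.2 aleph0_lt_continuum)

lemma Amb.rig1 [T2Space M] (A : Amb B p V M) (hp : ∀ i j, i ≠ j → 1 ≤ dist (p i) (p j))
    (hK : ∀ K : Set ℂ, IsClosed K → ¬ K.Countable → 𝔠 ≤ #(K ∩ B : Set ℂ))
    (hR : ∀ (O : Set ℂ) (f : ℂ → ℂ), IsOpen O → ContinuousOn f (O ∩ B) → MapsTo f (O ∩ B) B →
      InjOn f (O ∩ B) → ∀ x ∈ O ∩ B, f x = x)
    (E : Set (ℕ → V)) (φ : B → M) (hφ : Continuous φ) (hi : Function.Injective φ)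
    (hE : ∀ b, ∃ e ∈ E, ∃ b', φ b = A.F e b') : ∃ e ∈ E, ∀ b, φ b = A.F e b := by
  let D : Set B := {b | A.pr (φ b) ∈ range p}
  have hDopen : IsOpen Dᶜ := by
    have : Dᶜ = ⋃ e, {b | A.uu e (φ b) ≠ 0} := by
      ext b
      obtain ⟨e, -, b', h⟩ := hE b
      simp only [D, mem_compl_iff, mem_setOf_eq, mem_iUnion, h, A.hpr, A.hu]
      exact ⟨fun h => ⟨e, rfl, h⟩, fun ⟨_, _, h⟩ => h⟩
    rw [this]
    exact isOpen_iUnion fun e => isOpen_ne_fun ((A.cu e).comp hφ) continuous_const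
  have hDc : D.Countable := by
    have hd : DiscreteTopology D := by
      rw [discreteTopology_iff_isOpen_singleton]
      rintro ⟨b, hb⟩
      obtain ⟨e, -, b', h⟩ := hE b
      have hb2 := hb
      simp only [D, mem_setOf_eq, h, A.hpr] at hb2
      obtain ⟨j, rfl⟩ := hb2
      refine ⟨{b | A.vv j (e j) (φ b) ≠ 0},
        isOpen_ne_fun ((A.cv j (e j)).comp hφ) continuous_const, ?_⟩
      ext ⟨c, hc⟩
      simp only [mem_preimage, mem_setOf_eq, mem_singleton_iff, Subtype.mk.injEq]
      constructor
      · intro hv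
        obtain ⟨e2, -, b2, h2⟩ := hE c
        have hc2 := hc
        simp only [D, mem_setOf_eq, h2, A.hpr] at hc2
        obtain ⟨i, rfl⟩ := hc2
        rw [h2, A.hv] at hv
        have hij : i = j := by
          by_contra hne
          exact absurd (hp i j hne) (not_le.2 hv.2)
        subst hij
        apply hi
        rw [h, h2]
        exact A.hF _ _ _ hv.1
      · rintro rfl
        rw [h, A.hv]
        exact ⟨rfl, by simp⟩
    exact (countable_coe_iff).1 (countable_of_Lindelof_of_discrete (X := D))
  have hdense := dense_compl hK D hDc
  have hpre : IsPreconnected Dᶜ := by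
    have := rigid_conn hK (Subtype.val '' D) (hDc.image _)
    rw [← IsInducing.subtypeVal.isPreconnected_image]
    convert this using 1
    ext x
    constructor
    · rintro ⟨y, hy, rfl⟩
      exact ⟨y.2, fun ⟨z, hz, hzy⟩ => hy (Subtype.ext hzy ▸ hz)⟩
    · rintro ⟨hx, hn⟩
      exact ⟨⟨x, hx⟩, fun h => hn ⟨_, h, rfl⟩, rfl⟩
  haveI : Nonempty B := ⟨p 0⟩
  obtain ⟨b0, hb0⟩ := hdense.nonempty
  obtain ⟨e0, he0, b0', h0⟩ := hE b0
  have hu0 : A.uu e0 (φ b0) ≠ 0 := by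
    rw [h0, A.hu]
    refine ⟨rfl, fun h => hb0 ?_⟩
    simpa only [D, mem_setOf_eq, h0, A.hpr] using h
  have hone : ∀ b ∈ Dᶜ, A.uu e0 (φ b) ≠ 0 := by
    by_contra hcon
    push Not at hcon
    obtain ⟨c, hc, hcu⟩ := hcon
    obtain ⟨x, hx1, hx2, hx3⟩ := hpre {b | A.uu e0 (φ b) ≠ 0} (⋃ e ∈ {e | e ≠ e0}, {b | A.uu e (φ b) ≠ 0})
      (isOpen_ne_fun ((A.cu _).comp hφ) continuous_const)
      (isOpen_biUnion fun e _ => isOpen_ne_fun ((A.cu e).comp hφ) continuous_const) (by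
        intro b hb
        obtain ⟨e, -, b', h⟩ := hE b
        have : A.uu e (φ b) ≠ 0 := by
          rw [h, A.hu]
          refine ⟨rfl, fun h2 => hb ?_⟩
          simpa only [D, mem_setOf_eq, h, A.hpr] using h2
        by_cases he : e = e0
        · subst he; exact Or.inl this
        · exact Or.inr (mem_biUnion (show e ∈ {e | e ≠ e0} from he) this)) ⟨b0, hb0, hu0⟩ (by
        obtain ⟨e, -, b', h⟩ := hE c
        have : A.uu e (φ c) ≠ 0 := by
          rw [h, A.hu]
          refine ⟨rfl, fun h2 => hc ?_⟩
          simpa only [D, mem_setOf_eq, h, A.hpr] using h2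
        refine ⟨c, hc, mem_biUnion (show e ∈ {e | e ≠ e0} from ?_) this⟩
        rintro rfl
        exact this hcu)
    simp only [mem_iUnion, mem_setOf_eq, exists_prop] at hx2 hx3
    obtain ⟨e, hne, he⟩ := hx3
    obtain ⟨e2, -, b', h⟩ := hE x
    rw [h, A.hu] at hx2 he
    exact hne (he.1.trans hx2.1.symm)
  have hloc : ∀ b ∈ Dᶜ, φ b = A.F e0 (A.pr (φ b)) := by
    intro b hb
    obtain ⟨e2, -, b', h⟩ := hE b
    have := hone b hb
    rw [h, A.hu] at this
    rw [h, A.hpr, this.1]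
  obtain ⟨O, hO, hOD⟩ := isOpen_induced_iff.1 hDopen
  have hOB : ∀ x (hx : x ∈ O ∩ B), (⟨x, hx.2⟩ : B) ∈ Dᶜ := by
    intro x hx
    rw [← hOD]; exact hx.1
  classical
  let f : ℂ → ℂ := fun x => if h : x ∈ B then (A.pr (φ ⟨x, h⟩) : ℂ) else 0
  have hfB : ∀ x (h : x ∈ B), f x = A.pr (φ ⟨x, h⟩) := fun x h => dif_pos h
  have hid := hR O f hO (by
      have : ContinuousOn f B := by
        rw [continuousOn_iff_continuous_restrict]
        have : B.domRestrict f = fun b => (A.pr (φ b) : ℂ) := by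
          funext b; exact hfB b b.2
        rw [this]
        exact continuous_subtype_val.comp (A.cpr.comp hφ)
      exact this.mono inter_subset_right)
    (by intro x hx; rw [hfB x hx.2]; exact Subtype.coe_prop _)
    (by
      intro x hx y hy hxy
      rw [hfB x hx.2, hfB y hy.2] at hxy
      have h1 := hloc _ (hOB x hx)
      have h2 := hloc _ (hOB y hy)
      rw [Subtype.ext hxy] at h1
      exact congrArg Subtype.val (hi (h1.trans h2.symm)))
  refine ⟨e0, he0, ?_⟩
  have heq : EqOn φ (A.F e0) Dᶜ := by
    intro b hb
    have hbO : (b : ℂ) ∈ O ∩ B := by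
      refine ⟨?_, b.2⟩
      rw [← hOD] at hb; exact hb
    have h1 := hid b hbO
    rw [hfB _ b.2] at h1
    rw [hloc b hb]
    congr 1
    exact Subtype.ext h1
  intro b
  exact congrFun (Continuous.ext_on hdense hφ (A.cF e0) heq) b

/-- The space attached to a set of edges -/
def Amb.Y (A : Amb B p V M) (E : Set (ℕ → V)) : Set M := {y | ∃ e ∈ E, ∃ b, y = A.F e b}

lemma Amb.rig2 [T2Space M] [LinearOrder V] [WellFoundedLT V] [BoundedOrder V]
    (A : Amb B p V M) (hp : ∀ i j, i ≠ j → 1 ≤ dist (p i) (p j))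
    (hK : ∀ K : Set ℂ, IsClosed K → ¬ K.Countable → 𝔠 ≤ #(K ∩ B : Set ℂ))
    (hR : ∀ (O : Set ℂ) (f : ℂ → ℂ), IsOpen O → ContinuousOn f (O ∩ B) → MapsTo f (O ∩ B) B →
      InjOn f (O ∩ B) → ∀ x ∈ O ∩ B, f x = x)
    (hV : ∀ x : V, x < ⊤ → ∃ y, x < y ∧ y < ⊤) {m m' : V} (hm0 : ⊥ < m) (hm1 : m < ⊤)
    (f : A.Y (Ed m) → A.Y (Ed m')) (hf : Continuous f) (hi : Function.Injective f) :
    m' = m ∧ ∀ y, (f y : M) = y := by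
  have hmem : ∀ e ∈ Ed m, ∀ b, A.F e b ∈ A.Y (Ed m) := fun e he b => ⟨e, he, b, rfl⟩
  have h1 : ∀ e, ∃ e', ∀ he : e ∈ Ed m, e' ∈ Ed m' ∧ ∀ b, (f ⟨_, hmem e he b⟩ : M) = A.F e' b := by
    intro e
    by_cases he : e ∈ Ed m
    · obtain ⟨e', he', h⟩ := A.rig1 hp hK hR (Ed m') (fun b => (f ⟨_, hmem e he b⟩ : M))
        (continuous_subtype_val.comp (hf.comp ((A.cF e).subtype_mk _)))
        (by
          intro b b' hbb
          have := hi (Subtype.ext hbb)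
          exact A.inj (congrArg Subtype.val this))
        (fun b => (f ⟨_, hmem e he b⟩).2)
      exact ⟨e', fun _ => ⟨he', h⟩⟩
    · exact ⟨e, fun h => absurd h he⟩
  choose τ hτ using h1
  obtain ⟨h2, h3⟩ := comb hV hm0 hm1 τ (fun e he => (hτ e he).1) (m' := m') (by
    intro e he e' he' j
    rw [← A.iff_vertex, ← A.iff_vertex, ← (hτ e he).2, ← (hτ e' he').2]
    constructor
    · intro h
      simp only [h]
    · intro h
      exact congrArg Subtype.val (hi (Subtype.ext h)))
  refine ⟨h2, ?_⟩
  rintro ⟨y, e, he, b, rfl⟩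
  rw [(hτ e he).2, h3 e he]

lemma Amb.conn [LinearOrder V] [WellFoundedLT V] [BoundedOrder V]
    (A : Amb B p V M)
    (hK : ∀ K : Set ℂ, IsClosed K → ¬ K.Countable → 𝔠 ≤ #(K ∩ B : Set ℂ))
    {m : V} (hm0 : ⊥ < m) (hm1 : m < ⊤) : PreconnectedSpace (A.Y (Ed m)) := by
  have hmem : ∀ e ∈ Ed m, ∀ b, A.F e b ∈ A.Y (Ed m) := fun e he b => ⟨e, he, b, rfl⟩
  haveI : PreconnectedSpace B := by
    have := rigid_conn hK ∅ countable_empty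
    rw [diff_empty] at this
    exact Subtype.preconnectedSpace this
  refine preconnectedSpace_of_forall_constant fun f hf => ?_
  classical
  let φ : (ℕ → V) → Bool := fun e => if he : e ∈ Ed m then f ⟨_, hmem e he (p 0)⟩ else true
  have hφ : ∀ e (he : e ∈ Ed m) b, f ⟨_, hmem e he b⟩ = φ e := by
    intro e he b
    simp only [φ, dif_pos he]
    exact PreconnectedSpace.constant ‹_›
      (f := fun b => f ⟨_, hmem e he b⟩) (hf.comp ((A.cF e).subtype_mk _))
  have := conn_comb hm0 hm1 φ (by
    intro e he e' he' j hj
    rw [← hφ e he (p j), ← hφ e' he' (p j)]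
    simp only [A.hF e e' j hj])
  rintro ⟨y, e, he, b, rfl⟩ ⟨y', e', he', b', rfl⟩
  rw [hφ e he, hφ e' he', this e he, this e' he']

end

/-- The properties of the family of spaces -/
structure Fam (I : Type u) (Y : I → Type u) [∀ i, TopologicalSpace (Y i)] where
  g : ∀ i, ℕ → Y i → ℝ
  e : ∀ i, ℕ → Y i
  cg : ∀ i n, Continuous (g i n)
  ge : ∀ i n k, g i n (e i k) = if n = k then 1 else 0
  pre : ∀ i, PreconnectedSpace (Y i)
  no_map : ∀ i j, i ≠ j → ∀ f : Y i → Y j, Continuous f → ¬ Function.Injective f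
  rigid : ∀ i, ∀ f : Y i → Y i, Continuous f → Function.Injective f → ∀ y, f y = y

theorem exists_fam (α : Cardinal.{u}) (hα : 𝔠 ≤ α) (I : Type u) [LinearOrder I] [WellFoundedLT I]
    [NoMaxOrder I] [Nonempty I] (hI : #I = α) :
    ∃ (Y : I → Type u) (_ : ∀ i, TopologicalSpace (Y i)),
      (∀ i, TopologicalSpace.MetrizableSpace (Y i)) ∧ (∀ i, #(Y i) ≤ α) ∧ Nonempty (Fam I Y) := by
  obtain ⟨B, hK, hR⟩ := exists_rigid
  obtain ⟨p, hp⟩ := rigid_points hK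
  letI : SuccOrder I := SuccOrder.ofLinearWellFoundedLT I
  letI : OrderBot I := WellFoundedLT.toOrderBot I
  obtain ⟨M, tM, hM, ⟨A⟩⟩ := exists_amb p hp (WithTop I)
  have hα0 : ℵ₀ ≤ α := aleph0_le_continuum.trans hα
  let m : I → WithTop I := fun i => ((Order.succ i : I) : WithTop I)
  have hm0 : ∀ i, ⊥ < m i := fun i => by
    rw [← WithTop.coe_bot]
    exact WithTop.coe_lt_coe.2 (bot_le.trans_lt (Order.lt_succ i))
  have hm1 : ∀ i, m i < ⊤ := fun i => WithTop.coe_lt_top _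
  have hmi : Function.Injective m := fun i j h => Order.succ_injective (WithTop.coe_injective h)
  have hV : ∀ x : WithTop I, x < ⊤ → ∃ y, x < y ∧ y < ⊤ := by
    intro x hx
    lift x to I using hx.ne
    exact ⟨m x, WithTop.coe_lt_coe.2 (Order.lt_succ x), hm1 x⟩
  have hVc : #(WithTop I) ≤ α := by
    have : #(WithTop I) = #I + 1 := mk_option
    rw [this, hI]
    exact (add_one_eq hα0).le
  have hBc : Cardinal.lift.{u} #B ≤ α := by
    have : #B ≤ 𝔠 := by rw [← mk_complex]; exact mk_set_le _
    calc Cardinal.lift.{u} #B ≤ Cardinal.lift.{u} 𝔠 := lift_le.2 this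
      _ = 𝔠 := lift_continuum
      _ ≤ α := hα
  have hmem : ∀ i b, A.F (t1 ⊥ ⊤) b ∈ A.Y (Ed (m i)) := fun i b =>
    ⟨_, Or.inl ⟨⊥, ⊤, (hm0 i).trans (hm1 i), rfl⟩, b, rfl⟩
  refine ⟨fun i => A.Y (Ed (m i)), fun i => inferInstance, fun i => inferInstance, ?_, ⟨?_⟩⟩
  · intro i
    have h1 : #(Ed (m i) × B) ≤ α := by
      rw [mk_prod]
      refine (mul_le_mul' ?_ hBc).trans (mul_eq_self hα0).le
      simpa using card_Ed (m i) α hα0 hVc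
    refine le_trans ?_ h1
    refine mk_le_of_surjective (f := fun q : Ed (m i) × B => (⟨A.F q.1 q.2, q.1, q.1.2, q.2, rfl⟩ : A.Y (Ed (m i)))) ?_
    rintro ⟨y, e, he, b, rfl⟩
    exact ⟨(⟨e, he⟩, b), rfl⟩
  · refine ⟨fun i n y => max 0 (1 - dist (A.pr y) (p n)), fun i n => ⟨_, hmem i (p n)⟩, ?_, ?_, ?_, ?_, ?_⟩
    · intro i n
      have := A.cpr.comp (continuous_subtype_val (p := (· ∈ A.Y (Ed (m i)))))
      have h2 : Continuous fun b : B => max 0 (1 - dist b (p n)) := by fun_prop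
      exact h2.comp this
    · intro i n k
      simp only [A.hpr]
      by_cases h : n = k
      · subst h; simp
      · rw [if_neg h]
        have := hp k n (Ne.symm h)
        exact max_eq_left (by linarith)
    · exact fun i => A.conn hK (hm0 i) (hm1 i)
    · intro i j hij f hf hi
      exact hij (hmi (A.rig2 hp hK hR hV (hm0 i) (hm1 i) f hf hi).1.symm)
    · intro i f hf hi y
      exact Subtype.ext ((A.rig2 hp hK hR hV (hm0 i) (hm1 i) f hf hi).2 y)

end RepQ


namespace RepQ
open Cardinal Set Topology Filter

lemma metrizable_sum (X Y : Type*) [TopologicalSpace X] [TopologicalSpace Y]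
    [TopologicalSpace.MetrizableSpace X] [TopologicalSpace.MetrizableSpace Y] :
    TopologicalSpace.MetrizableSpace (X ⊕ Y) := by
  letI := TopologicalSpace.metrizableSpaceMetric X
  letI := TopologicalSpace.metrizableSpaceMetric Y
  letI := Metric.metricSpaceSum (X := X) (Y := Y)
  infer_instance

lemma metrizable_sigma {ι : Type*} (X : ι → Type*) [∀ i, TopologicalSpace (X i)]
    [∀ i, TopologicalSpace.MetrizableSpace (X i)] :
    TopologicalSpace.MetrizableSpace (Σ i, X i) := by
  letI := fun i => TopologicalSpace.metrizableSpaceMetric (X i)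
  letI := Metric.Sigma.metricSpace (E := X)
  infer_instance

/-- The gadget -/
def Gad {Y : Type u} (_ : ℕ → Y → ℝ) : Type u := ℤ ⊕ (ℕ × Y)

namespace Gad
section
variable {Y : Type u} {g : ℕ → Y → ℝ}

/-- special points -/
def X (g : ℕ → Y → ℝ) (j : ℤ) : Gad g := Sum.inl j
/-- blocks -/
def E (g : ℕ → Y → ℝ) (n : ℕ) (y : Y) : Gad g := Sum.inr (n, y)

lemma cases (a : Gad g) : (∃ j, a = X g j) ∨ ∃ n y, a = E g n y := by
  rcases a with j | ⟨n, y⟩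
  · exact Or.inl ⟨j, rfl⟩
  · exact Or.inr ⟨n, y, rfl⟩

lemma E_inj {n n' : ℕ} {y y' : Y} (h : E g n y = E g n' y') : n = n' ∧ y = y' :=
  Prod.mk.inj (Sum.inr.inj h)

lemma X_ne_E {j : ℤ} {n' : ℕ} {y' : Y} : X g j ≠ E g n' y' := by
  intro h; cases h

/-- level -/
def lev : Gad g → Option ℕ
  | Sum.inl _ => none
  | Sum.inr (n, _) => some n

@[simp] lemma lev_X (j : ℤ) : lev (X g j) = none := rfl
@[simp] lemma lev_E (n : ℕ) (y : Y) : lev (E g n y) = some n := rfl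

/-- block coordinate -/
def th (m : ℕ) : Gad g → Y ⊕ Unit
  | Sum.inl _ => Sum.inr ()
  | Sum.inr (n, y) => if n = m then Sum.inl y else Sum.inr ()

/-- real coordinate -/
def ch (j : ℤ) : Gad g → ℝ
  | Sum.inl k => if j = k then 1 else 0
  | Sum.inr (n, y) => g (n + 2 * j).toNat y

lemma th_X (m : ℕ) (j : ℤ) : th m (X g j) = Sum.inr () := rfl
lemma th_E (m n : ℕ) (y : Y) : th m (E g n y) = if n = m then Sum.inl y else Sum.inr () := rfl
lemma ch_X (j k : ℤ) : ch j (X g k) = if j = k then 1 else 0 := rfl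
lemma ch_E (j : ℤ) (n : ℕ) (y : Y) : ch j (E g n y) = g (n + 2 * j).toNat y := rfl

/-- all coordinates -/
def Th (a : Gad g) : (ℕ → Y ⊕ Unit) × (ℤ → ℝ) := (fun m => th m a, fun j => ch j a)

variable [TopologicalSpace Y]

instance : TopologicalSpace (Gad g) := TopologicalSpace.induced Th inferInstance

lemma isEmbedding_Th : IsEmbedding (Th (g := g)) := by
  refine ⟨⟨rfl⟩, ?_⟩
  intro a b hab
  have h1 : ∀ m, th m a = th m b := fun m => congrFun (congrArg Prod.fst hab) m
  have h2 : ∀ m, ch m a = ch m b := fun m => congrFun (congrArg Prod.snd hab) m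
  rcases cases a with ⟨j, rfl⟩ | ⟨n, y, rfl⟩ <;> rcases cases b with ⟨j', rfl⟩ | ⟨n', y', rfl⟩
  · have := h2 j
    simp [ch_X] at this
    rw [this]
  · have := h1 n'
    simp [th_X, th_E] at this
  · have := h1 n
    simp [th_X, th_E] at this
  · have := h1 n
    simp only [th_E, if_true] at this
    by_cases h : n' = n
    · subst h; simp at this; rw [this]
    · rw [if_neg h] at this; simp at this

lemma metrizable [TopologicalSpace.MetrizableSpace Y] :
    TopologicalSpace.MetrizableSpace (Gad g) := by
  haveI := metrizable_sum Y Unit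
  letI := TopologicalSpace.metrizableSpaceMetric (Y ⊕ Unit)
  exact isEmbedding_Th.metrizableSpace

lemma continuous_iff {Z : Type*} [TopologicalSpace Z] {f : Z → Gad g} :
    Continuous f ↔ (∀ m, Continuous fun z => th m (f z)) ∧ ∀ j, Continuous fun z => ch j (f z) := by
  rw [isEmbedding_Th.continuous_iff, continuous_prodMk, continuous_pi_iff, continuous_pi_iff]
  rfl

lemma cth (m : ℕ) : Continuous (th (g := g) m) := (continuous_iff.1 continuous_id).1 m
lemma cch (j : ℤ) : Continuous (ch (g := g) j) := (continuous_iff.1 continuous_id).2 j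

lemma clopen_lev (n : ℕ) : IsClopen {a : Gad g | lev a = some n} := by
  have : {a : Gad g | lev a = some n} = th n ⁻¹' (range Sum.inl) := by
    ext a
    rcases cases a with ⟨j, rfl⟩ | ⟨k, y, rfl⟩
    · simp [th_X]
    · by_cases h : k = n <;> simp [th_E, h]
  rw [this]
  exact isClopen_range_inl.preimage (cth n)

lemma range_E (n : ℕ) : range (E g n) = {a : Gad g | lev a = some n} := by
  ext a
  rcases cases a with ⟨j, rfl⟩ | ⟨k, y, rfl⟩
  · simp only [mem_range, mem_setOf_eq, lev_X, reduceCtorEq, iff_false]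
    rintro ⟨y, h⟩; exact X_ne_E h.symm
  · simp only [mem_range, mem_setOf_eq, lev_E, Option.some.injEq]
    constructor
    · rintro ⟨y', h⟩; exact (E_inj h).1.symm
    · rintro rfl; exact ⟨y, rfl⟩

lemma cE (cg : ∀ n, Continuous (g n)) (n : ℕ) : Continuous (E g n) := by
  rw [continuous_iff]
  constructor
  · intro m
    simp only [th_E]
    by_cases h : n = m
    · simp only [h, if_true]; exact continuous_inl
    · simp only [h, if_false]; exact continuous_const
  · intro j
    simp only [ch_E]; exact cg _

lemma isOpenEmbedding_E (cg : ∀ n, Continuous (g n)) (n : ℕ) : IsOpenEmbedding (E g n) := by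
  refine ⟨IsEmbedding.of_comp (cE cg n) (cth n) ?_, ?_⟩
  · have : th n ∘ E g n = Sum.inl := by
      funext y; simp [th_E]
    rw [this]; exact IsEmbedding.inl
  · rw [range_E]; exact (clopen_lev n).2

lemma tendsto_X {e : ℕ → Y} (ge : ∀ n k, g n (e k) = if n = k then 1 else 0) (j : ℤ) :
    Tendsto (fun n : ℕ => E g n (e (n + 2 * j).toNat)) atTop (𝓝 (X g j)) := by
  rw [isEmbedding_Th.tendsto_nhds_iff]
  refine Tendsto.prodMk_nhds ?_ ?_
  · rw [tendsto_pi_nhds]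
    intro m
    refine tendsto_const_nhds.congr' ?_
    filter_upwards [eventually_gt_atTop m] with n hn
    simp [th_X, th_E, hn.ne']
  · rw [tendsto_pi_nhds]
    intro k
    refine tendsto_const_nhds.congr' ?_
    filter_upwards [eventually_gt_atTop (2 * k.natAbs + 2 * j.natAbs)] with n hn
    simp only [ch_X, ch_E, ge]
    congr 1
    apply propext
    omega

/-- the shift -/
def sh : Gad g → Gad g
  | Sum.inl j => X g (j - 1)
  | Sum.inr (n, y) => E g (n + 2) y

lemma sh_X (j : ℤ) : sh (X g j) = X g (j - 1) := rfl
lemma sh_E (n : ℕ) (y : Y) : sh (E g n y) = E g (n + 2) y := rfl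

lemma th_sh (m : ℕ) (a : Gad g) : th (m + 2) (sh a) = th m a := by
  rcases cases a with ⟨j, rfl⟩ | ⟨k, y, rfl⟩
  · simp [sh_X, th_X]
  · simp [sh_E, th_E]

lemma ch_sh (j : ℤ) (a : Gad g) : ch j (sh a) = ch (j + 1) a := by
  rcases cases a with ⟨k, rfl⟩ | ⟨k, y, rfl⟩
  · simp only [sh_X, ch_X]; congr 1; apply propext; omega
  · simp only [sh_E, ch_E]; congr 2; push_cast; ring

lemma csh : Continuous (sh (g := g)) := by
  rw [continuous_iff]
  constructor
  · intro m
    by_cases h : m < 2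
    · have : (fun z : Gad g => th m (sh z)) = fun _ => Sum.inr () := by
        funext a
        rcases cases a with ⟨j, rfl⟩ | ⟨k, y, rfl⟩
        · simp [sh_X, th_X]
        · simp only [sh_E, th_E]; rw [if_neg (by omega)]
      rw [this]; exact continuous_const
    · obtain ⟨k, rfl⟩ : ∃ k, m = k + 2 := ⟨m - 2, by omega⟩
      simp only [th_sh]; exact cth k
  · intro j
    simp only [ch_sh]; exact cch _

lemma range_sh : range (sh (g := g)) = {a | lev a ≠ some 0 ∧ lev a ≠ some 1} := by
  ext a
  constructor
  · rintro ⟨b, rfl⟩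
    rcases cases b with ⟨j, rfl⟩ | ⟨k, y, rfl⟩
    · simp [sh_X]
    · simp [sh_E]
  · rintro ⟨h0, h1⟩
    rcases cases a with ⟨j, rfl⟩ | ⟨k, y, rfl⟩
    · exact ⟨X g (j + 1), by simp [sh_X]⟩
    · simp only [lev_E, ne_eq, Option.some.injEq] at h0 h1
      refine ⟨E g (k - 2) y, ?_⟩
      rw [sh_E]; congr 1; omega

/-- a connected nontrivial space mapped injectively lands in a block -/
lemma land {Z : Type*} [TopologicalSpace Z] [PreconnectedSpace Z] {z0 z1 : Z} (hz : z0 ≠ z1)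
    (f : Z → Gad g) (hf : Continuous f) (hi : Function.Injective f) : ∃ n, ∀ z, ∃ y, f z = E g n y := by
  rcases cases (f z0) with ⟨j, hj⟩ | ⟨n, y, hn⟩
  · exfalso
    by_cases hall : ∀ z, ∃ k, f z = X g k
    · have hc : IsClopen {z | ch j (f z) = 1} := by
        constructor
        · exact isClosed_eq ((cch j).comp hf) continuous_const
        · have : {z | ch j (f z) = 1} = {z | (1/2 : ℝ) < ch j (f z)} := by
            ext z
            obtain ⟨k, hk⟩ := hall z
            simp only [mem_setOf_eq, hk, ch_X]
            split_ifs <;> norm_num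
          rw [this]
          exact isOpen_lt continuous_const ((cch j).comp hf)
      have h1 : z1 ∈ {z | ch j (f z) = 1} := by
        rw [hc.eq_univ ⟨z0, by simp [hj, ch_X]⟩]; trivial
      obtain ⟨k, hk⟩ := hall z1
      simp only [mem_setOf_eq, hk, ch_X] at h1
      have hjk : j = k := by by_contra h; simp [h] at h1
      exact hz (hi (by rw [hj, hk, hjk]))
    · push Not at hall
      obtain ⟨z, hz⟩ := hall
      rcases cases (f z) with ⟨k, hk⟩ | ⟨n, y, hn⟩
      · exact hz k hk
      · have hc : IsClopen {z | lev (f z) = some n} := (clopen_lev n).preimage hf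
        have h1 : z0 ∈ {z | lev (f z) = some n} := by
          rw [hc.eq_univ ⟨z, by simp [hn]⟩]; trivial
        simp [hj] at h1
  · refine ⟨n, fun z => ?_⟩
    have hc : IsClopen {z | lev (f z) = some n} := (clopen_lev n).preimage hf
    have h1 : z ∈ {z | lev (f z) = some n} := by
      rw [hc.eq_univ ⟨z0, by simp [hn]⟩]; trivial
    have h2 : f z ∈ range (E g n) := by rw [range_E]; exact h1
    obtain ⟨y, hy⟩ := h2
    exact ⟨y, hy.symm⟩

end
end Gad

/-- point plus Cantor set -/
abbrev Cp : Type := Unit ⊕ (ℕ → Bool)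

instance : TotallyDisconnectedSpace Cp := inferInstance

lemma clopen_star : IsClopen ({Sum.inl ()} : Set Cp) := by
  have : ({Sum.inl ()} : Set Cp) = range Sum.inl := by
    ext x
    exact ⟨fun h => ⟨(), h.symm⟩, fun ⟨_, h⟩ => h.symm⟩
  rw [this]; exact isClopen_range_inl

lemma star_of_isOpen {c : Cp} (h : IsOpen ({c} : Set Cp)) : c = Sum.inl () := by
  rcases c with ⟨⟩ | c
  · rfl
  · exfalso
    have h1 : IsOpen ({c} : Set (ℕ → Bool)) := by
      have := h.preimage (continuous_inr (X := Unit) (Y := ℕ → Bool))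
      convert this using 1
      ext x; simp
    let d : ℕ → (ℕ → Bool) := fun n => Function.update c n (!(c n))
    have hd : Tendsto d atTop (𝓝 c) := by
      rw [tendsto_pi_nhds]
      intro k
      refine tendsto_const_nhds.congr' ?_
      filter_upwards [eventually_gt_atTop k] with n hn
      simp [d, hn.ne]
    obtain ⟨n, hn⟩ := (hd.eventually (h1.mem_nhds rfl)).exists
    have := congrFun hn n
    simp [d] at this

/-- self embedding of Cp missing the isolated point -/
def kap : Cp → Cp
  | Sum.inl _ => Sum.inr fun _ => false
  | Sum.inr c => Sum.inr fun n => match n with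
    | 0 => true
    | n + 1 => c n

lemma kap_ne (c : Cp) : kap c ≠ Sum.inl () := by
  rcases c with _ | c <;> simp [kap]

lemma kap_emb : IsClosedEmbedding kap := by
  apply Continuous.isClosedEmbedding
  · rw [continuous_sum_dom]
    constructor
    · exact continuous_of_discreteTopology
    · refine continuous_inr.comp (continuous_pi fun n => ?_)
      cases n with
      | zero => exact continuous_const
      | succ n => exact continuous_apply n
  · rintro (a | a) (b | b) h
    · rfl
    · simp only [kap, Sum.inr.injEq] at h
      simpa using congrFun h 0
    · simp only [kap, Sum.inr.injEq] at h
      simpa using congrFun h 0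
    · simp only [kap, Sum.inr.injEq] at h
      congr 1
      funext n
      exact congrFun h (n + 1)

/-- shift on the starred fiber -/
noncomputable def shs {Y : Type u} {g : ℕ → Y → ℝ} (w : Gad g × Cp) : Gad g × Cp :=
  open Classical in if w.2 = Sum.inl () then (w.1.sh, w.2) else w

lemma cont_ite_star {Z W : Type*} [TopologicalSpace Z] [TopologicalSpace W] {P : Z → Cp}
    (hP : Continuous P) [∀ z, Decidable (P z = Sum.inl ())]
    {f h : Z → W} (hf : Continuous f) (hh : Continuous h) :
    Continuous (fun z => if P z = Sum.inl () then f z else h z) := by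
  refine Continuous.if ?_ hf hh
  intro a ha
  have : IsClopen {z | P z = Sum.inl ()} := clopen_star.preimage hP
  rw [this.frontier_eq] at ha
  exact absurd ha (by simp)

section
variable {Y : Type u} {g : ℕ → Y → ℝ} [TopologicalSpace Y]
lemma shs_emb : IsOpenEmbedding (shs (g := g)) ∧ IsClosedEmbedding (shs (g := g)) := by
  classical
  have hc : Continuous (shs (g := g)) := by
    unfold shs
    exact cont_ite_star continuous_snd
      ((Gad.csh.comp continuous_fst).prodMk continuous_snd) continuous_id
  let Ps : Gad g × Cp → ((ℕ → Y ⊕ Unit) × (ℤ → ℝ)) × Cp := fun w =>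
    (if w.2 = Sum.inl () then (fun m => Gad.th (m + 2) w.1, fun j => Gad.ch (j - 1) w.1)
      else Gad.Th w.1, w.2)
  have hPs : Continuous Ps := by
    refine Continuous.prodMk (cont_ite_star continuous_snd ?_
      (Gad.isEmbedding_Th.continuous.comp continuous_fst)) continuous_snd
    exact (continuous_pi fun m => (Gad.cth _).comp continuous_fst).prodMk
      (continuous_pi fun m => (Gad.cch _).comp continuous_fst)
  have hcomp : Ps ∘ shs (g := g) = Prod.map Gad.Th id := by
    funext ⟨a, c⟩
    by_cases h : c = Sum.inl ()
    · simp only [Function.comp, Ps, shs, h, if_true, Prod.map, id, Gad.th_sh, Gad.ch_sh, Gad.Th]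
      simp
    · simp [Function.comp, Ps, shs, h]
  have hemb : IsEmbedding (shs (g := g)) := by
    refine IsEmbedding.of_comp hc hPs ?_
    rw [hcomp]
    exact Gad.isEmbedding_Th.prodMap IsEmbedding.id
  have hrange : IsClopen (range (shs (g := g))) := by
    have : range (shs (g := g)) = ({w | w.2 = Sum.inl ()} ∩
        ({w | w.1.lev = some 0}ᶜ ∩ {w | w.1.lev = some 1}ᶜ)) ∪ {w | w.2 = Sum.inl ()}ᶜ := by
      ext ⟨a, c⟩
      by_cases h : c = Sum.inl ()
      · subst h
        have hr : a ∈ range (Gad.sh (g := g)) ↔ a.lev ≠ some 0 ∧ a.lev ≠ some 1 := by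
          rw [Gad.range_sh]; rfl
        simp only [mem_union, mem_inter_iff, mem_compl_iff, mem_setOf_eq, true_and, not_true,
          or_false]
        rw [← ne_eq, ← ne_eq, ← hr]
        constructor
        · rintro ⟨⟨b, d⟩, hb⟩
          by_cases hd : d = Sum.inl ()
          · simp only [shs, hd, if_true, Prod.mk.injEq] at hb
            exact ⟨b, hb.1⟩
          · simp only [shs, hd, if_false, Prod.mk.injEq] at hb
            exact hb.2.elim
        · rintro ⟨b, rfl⟩
          exact ⟨(b, Sum.inl ()), by simp [shs]⟩
      · simp only [mem_union, mem_inter_iff, mem_compl_iff, mem_setOf_eq, h, false_and,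
          not_false_iff, or_true, iff_true]
        exact ⟨(a, c), by simp [shs, h]⟩
    rw [this]
    have k1 : IsClopen {w : Gad g × Cp | w.2 = Sum.inl ()} := clopen_star.preimage continuous_snd
    have k2 : ∀ n, IsClopen {w : Gad g × Cp | w.1.lev = some n} := fun n =>
      (Gad.clopen_lev n).preimage continuous_fst
    exact (k1.inter ((k2 0).compl.inter (k2 1).compl)).union k1.compl
  exact ⟨⟨hemb, hrange.2⟩, ⟨hemb, hrange.1⟩⟩
end

end RepQ


namespace RepQ
open Cardinal Set Topology Filter

lemma homeo_clopen_of {A B : Type*} [TopologicalSpace A] [TopologicalSpace B] (f : A → B)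
    (h1 : IsOpenEmbedding f) (h2 : IsClosedEmbedding f) : HomeoToClopenSubset A B :=
  ⟨range f, ⟨h2.isClosed_range, h1.isOpen_range⟩, ⟨h1.isEmbedding.toHomeomorph⟩⟩

lemma homeo_closed_of {A B : Type*} [TopologicalSpace A] [TopologicalSpace B] (f : A → B)
    (h2 : IsClosedEmbedding f) : HomeoToClosedSubset A B :=
  ⟨range f, h2.isClosed_range, ⟨h2.isEmbedding.toHomeomorph⟩⟩

lemma restr_closed {X : Type*} [TopologicalSpace X] {S S' : Set X} (hS : IsClopen S)
    (f : X → X) (hf : IsClosedEmbedding f) (hm : MapsTo f S S') :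
    IsClosedEmbedding (hm.restrict f S S') := by
  refine IsClosedEmbedding.of_comp (g := Subtype.val) IsEmbedding.subtypeVal ?_
  exact hf.comp hS.1.isClosedEmbedding_subtypeVal

lemma restr_open {X : Type*} [TopologicalSpace X] {S S' : Set X} (hS : IsClopen S)
    (hS' : IsClopen S')
    (f : X → X) (hf : IsOpenEmbedding f) (hm : MapsTo f S S') :
    IsOpenEmbedding (hm.restrict f S S') := by
  refine IsOpenEmbedding.of_comp (g := Subtype.val) _ hS'.2.isOpenEmbedding_subtypeVal ?_
  exact hf.comp hS.2.isOpenEmbedding_subtypeVal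

section
variable {I : Type u} {Y : I → Type u} [∀ i, TopologicalSpace (Y i)]

/-- the universal space -/
abbrev Tot (F : Fam I Y) : Type u := Σ i, Gad (F.g i) × Cp

variable (F : Fam I Y)

/-- block points -/
def pt (i : I) (n : ℕ) (y : Y i) (c : Cp) : Tot F := ⟨i, Gad.E (F.g i) n y, c⟩

/-- the isolated point -/
abbrev st : Cp := Sum.inl ()

lemma cpt (i : I) (n : ℕ) (c : Cp) : Continuous fun y => pt F i n y c :=
  continuous_sigmaMk.comp ((Gad.cE (F.cg i) n).prodMk continuous_const)

lemma cpt' (i : I) (n : ℕ) (y : Y i) : Continuous fun c => pt F i n y c :=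
  continuous_sigmaMk.comp (continuous_const.prodMk continuous_id)

lemma pt_inj {i : I} {n n' : ℕ} {y y' : Y i} {c c' : Cp} (h : pt F i n y c = pt F i n' y' c') :
    n = n' ∧ y = y' ∧ c = c' := by
  have h1 := eq_of_heq (Sigma.mk.inj h).2
  have h2 := Prod.mk.inj h1
  have h3 := Gad.E_inj h2.1
  exact ⟨h3.1, h3.2, h2.2⟩

lemma ne01 (i : I) : F.e i 0 ≠ F.e i 1 := by
  intro h
  have h1 := F.ge i 0 0
  rw [h, F.ge] at h1
  simp at h1

lemma land (i : I) (f : Y i → Tot F) (hf : Continuous f) (hi : Function.Injective f) :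
    ∃ n c, ∀ y, f y = pt F i n y c := by
  haveI := F.pre i
  have h1 : ∃ j, ∀ y, ∃ w, f y = ⟨j, w⟩ := by
    refine ⟨(f (F.e i 0)).1, fun y => ?_⟩
    have hc : IsClopen (f ⁻¹' range (Sigma.mk (f (F.e i 0)).1)) :=
      isClopen_range_sigmaMk.preimage hf
    have : y ∈ f ⁻¹' range (Sigma.mk (f (F.e i 0)).1) := by
      rw [hc.eq_univ ⟨F.e i 0, ⟨(f (F.e i 0)).2, rfl⟩⟩]; trivial
    obtain ⟨w, hw⟩ := this
    exact ⟨w, hw.symm⟩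
  obtain ⟨j, hj⟩ := h1
  choose a ha using hj
  have hfa : f = Sigma.mk j ∘ a := funext ha
  have ca : Continuous a := by
    rw [hfa] at hf
    exact IsEmbedding.sigmaMk.continuous_iff.2 hf
  have hconst : ∀ y, (a y).2 = (a (F.e i 0)).2 := by
    intro y
    exact (isPreconnected_range (continuous_snd.comp ca)).subsingleton ⟨y, rfl⟩ ⟨_, rfl⟩
  have inja : Function.Injective fun y => (a y).1 := by
    intro y y' h
    apply hi
    rw [ha, ha]
    congr 1
    exact Prod.ext h ((hconst y).trans (hconst y').symm)
  obtain ⟨n, hn⟩ := Gad.land (ne01 F i) (fun y => (a y).1) (continuous_fst.comp ca) inja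
  choose h hh using hn
  have ch : Continuous h := by
    rw [(Gad.isOpenEmbedding_E (F.cg j) n).isEmbedding.continuous_iff]
    exact (continuous_fst.comp ca).congr hh
  have ih : Function.Injective h := by
    intro y y' he
    apply inja
    change (a y).1 = (a y').1
    rw [hh, hh, he]
  by_cases hij : i = j
  · subst hij
    have hr := F.rigid i h ch ih
    refine ⟨n, (a (F.e i 0)).2, fun y => ?_⟩
    rw [ha]
    unfold pt
    congr 1
    refine Prod.ext ?_ (hconst y)
    change (a y).1 = _
    rw [hh, hr]
  · exact absurd ih (F.no_map i j hij h ch)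

lemma noiso [∀ i, T1Space (Y i)] (x : Tot F) : ¬ IsOpen ({x} : Set (Tot F)) := by
  obtain ⟨i, a, c⟩ := x
  intro ho
  haveI := F.pre i
  rcases Gad.cases a with ⟨j, rfl⟩ | ⟨n, y, rfl⟩
  · have ht : Tendsto (fun n : ℕ => pt F i n (F.e i (n + 2 * j).toNat) c) atTop
        (𝓝 ⟨i, Gad.X (F.g i) j, c⟩) :=
      (continuous_sigmaMk (σ := fun i => Gad (F.g i) × Cp) (i := i)).continuousAt.tendsto.comp
        ((Gad.tendsto_X (F.ge i) j).prodMk_nhds tendsto_const_nhds)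
    obtain ⟨n, hn⟩ := (ht.eventually (ho.mem_nhds rfl)).exists
    have h1 := eq_of_heq (Sigma.mk.inj (mem_singleton_iff.1 hn)).2
    exact Gad.X_ne_E (Prod.mk.inj h1).1.symm
  · have h1 : IsOpen ({y} : Set (Y i)) := by
      have := ho.preimage (cpt F i n c)
      convert this using 1
      ext z
      simp only [mem_singleton_iff, mem_preimage]
      constructor
      · rintro rfl; rfl
      · intro h; exact (pt_inj F (h : pt F i n z c = pt F i n y c)).2.1
    have hc : IsClopen ({y} : Set (Y i)) := ⟨isClosed_singleton, h1⟩
    have h2 := hc.eq_univ ⟨y, rfl⟩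
    have e0 : F.e i 0 ∈ ({y} : Set (Y i)) := by rw [h2]; trivial
    have e1 : F.e i 1 ∈ ({y} : Set (Y i)) := by rw [h2]; trivial
    exact ne01 F i ((mem_singleton_iff.1 e0).trans (mem_singleton_iff.1 e1).symm)

lemma land_open {U : Set (Tot F)} (H : U → Tot F) (hH : IsOpenEmbedding H) (i : I) (n : ℕ)
    (hm : ∀ y, pt F i n y st ∈ U) : ∃ n', ∀ y, H ⟨_, hm y⟩ = pt F i n' y st := by
  obtain ⟨n', c, h⟩ := land F i (fun y => H ⟨_, hm y⟩)
    (hH.continuous.comp ((cpt F i n st).subtype_mk _))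
    (fun y y' he => (pt_inj F (congrArg Subtype.val (hH.injective he))).2.1)
  refine ⟨n', ?_⟩
  have hW : IsOpen (range fun y => pt F i n y st) := by
    have : (range fun y => pt F i n y st) =
        Sigma.mk i '' ((range (Gad.E (F.g i) n)) ×ˢ {st}) := by
      ext x
      constructor
      · rintro ⟨y, rfl⟩
        exact ⟨(Gad.E (F.g i) n y, st), ⟨⟨y, rfl⟩, rfl⟩, rfl⟩
      · rintro ⟨⟨_, _⟩, ⟨⟨y, rfl⟩, rfl⟩, rfl⟩
        exact ⟨y, rfl⟩
    rw [this]
    exact isOpenMap_sigmaMk _ ((Gad.isOpenEmbedding_E (F.cg i) n).isOpen_range.prod clopen_star.2)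
  have hO : IsOpen (H '' (Subtype.val ⁻¹' (range fun y => pt F i n y st))) :=
    hH.isOpenMap _ (hW.preimage continuous_subtype_val)
  have hc : IsOpen ({c} : Set Cp) := by
    have := hO.preimage (cpt' F i n' (F.e i 0))
    convert this using 1
    ext d
    simp only [mem_singleton_iff, mem_preimage]
    constructor
    · rintro rfl
      exact ⟨⟨_, hm (F.e i 0)⟩, ⟨_, rfl⟩, h _⟩
    · rintro ⟨⟨x, hx⟩, ⟨y, hy⟩, hxy⟩
      have hy' : pt F i n y st = x := hy
      subst hy'
      exact (pt_inj F (hxy.symm.trans (h y))).2.2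
  have := star_of_isOpen hc
  subst this
  exact h

variable {Q : Type u} (ι : Q → I) (le1 le2 : Q → Q → Prop)

/-- the representing sets -/
def SS (q : Q) : Set (Tot F) := {x | ∃ p, ι p = x.1 ∧
  ((x.2.2 = st ∧ le1 p q ∧ (p = q → x.2.1.lev ≠ some 0)) ∨ (x.2.2 ≠ st ∧ le2 p q))}

lemma SS_clopen (q : Q) : IsClopen (SS F ι le1 le2 q) := by
  have h1 : IsLocallyConstant (fun x : Tot F => x.1) := by
    rw [IsLocallyConstant.iff_isOpen_fiber]
    intro i
    have : (fun x : Tot F => x.1) ⁻¹' {i} = range (Sigma.mk i) := by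
      ext ⟨j, w⟩
      constructor
      · rintro rfl; exact ⟨w, rfl⟩
      · rintro ⟨w, h⟩; exact (Sigma.mk.inj h).1.symm
    rw [this]
    exact isOpen_range_sigmaMk
  have hP : ∀ P : Tot F → Prop, IsClopen {x | P x} → IsLocallyConstant P := by
    intro P hc
    rw [IsLocallyConstant.iff_isOpen_fiber]
    intro r
    by_cases hr : r
    · have : P ⁻¹' {r} = {x | P x} := by ext x; simp [hr]
      rw [this]; exact hc.2
    · have : P ⁻¹' {r} = {x | P x}ᶜ := by ext x; simp [hr]
      rw [this]; exact hc.compl.2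
  have h2 : IsLocallyConstant (fun x : Tot F => x.2.2 = st) := by
    apply hP
    constructor
    · rw [isClosed_sigma_iff]; intro i; exact clopen_star.1.preimage continuous_snd
    · rw [isOpen_sigma_iff]; intro i; exact clopen_star.2.preimage continuous_snd
  have h3 : IsLocallyConstant (fun x : Tot F => x.2.1.lev = some 0) := by
    apply hP
    constructor
    · rw [isClosed_sigma_iff]; intro i; exact (Gad.clopen_lev 0).1.preimage continuous_fst
    · rw [isOpen_sigma_iff]; intro i; exact (Gad.clopen_lev 0).2.preimage continuous_fst
  have h := h1.prodMk (h2.prodMk h3)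
  let T : Set (I × Prop × Prop) := {t | ∃ p, ι p = t.1 ∧
    ((t.2.1 ∧ le1 p q ∧ (p = q → ¬ t.2.2)) ∨ (¬ t.2.1 ∧ le2 p q))}
  have : SS F ι le1 le2 q = (fun x : Tot F => (x.1, (x.2.2 = st), (x.2.1.lev = some 0))) ⁻¹' T := rfl
  rw [this]
  exact ⟨⟨h Tᶜ⟩, h T⟩

variable {ι le1 le2}

lemma pt_mem (hι : Function.Injective ι) {p q : Q} {n : ℕ} {y : Y (ι p)} :
    pt F (ι p) n y st ∈ SS F ι le1 le2 q ↔ le1 p q ∧ (p = q → n ≠ 0) := by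
  constructor
  · rintro ⟨p', hp, ⟨-, h1, h2⟩ | ⟨h, -⟩⟩
    · have := hι hp
      subst this
      refine ⟨h1, fun he hn => h2 he ?_⟩
      subst hn; rfl
    · exact absurd rfl h
  · rintro ⟨h1, h2⟩
    refine ⟨p, rfl, Or.inl ⟨rfl, h1, fun he h => h2 he ?_⟩⟩
    exact Option.some.inj h

lemma pt_mem_le2 (hι : Function.Injective ι) (h12 : ∀ q q', le1 q q' → le2 q q') {p q : Q} {n : ℕ}
    {y : Y (ι p)} {c : Cp} (h : pt F (ι p) n y c ∈ SS F ι le1 le2 q) : le2 p q := by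
  obtain ⟨p', hp, ⟨-, h1, h2⟩ | ⟨-, h⟩⟩ := h
  · rw [← hι hp]; exact h12 _ _ h1
  · rw [← hι hp]; exact h

lemma no_inj (hι : Function.Injective ι) (h12 : ∀ q q', le1 q q' → le2 q q')
    (r1 : ∀ q, le1 q q) {q q' : Q}
    (h : ExistsInjCont (SS F ι le1 le2 q) (SS F ι le1 le2 q')) : le2 q q' := by
  obtain ⟨f, hf, hi⟩ := h
  have hm : ∀ y, pt F (ι q) 1 y st ∈ SS F ι le1 le2 q := fun y =>
    (pt_mem F hι).2 ⟨r1 q, fun _ => one_ne_zero⟩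
  obtain ⟨n, c, h⟩ := land F (ι q) (fun y => (f ⟨_, hm y⟩ : Tot F))
    (continuous_subtype_val.comp (hf.comp ((cpt F _ 1 st).subtype_mk _)))
    (fun y y' he => (pt_inj F (congrArg Subtype.val (hi (Subtype.ext he)))).2.1)
  have h1 := (f ⟨_, hm (F.e _ 0)⟩).2
  have h2 := h (F.e _ 0)
  rw [h2] at h1
  exact pt_mem_le2 F hι h12 h1

lemma le1_of_clopen (hι : Function.Injective ι)
    (r1 : ∀ q, le1 q q) {q q' : Q}
    (h : HomeoToClopenSubset (SS F ι le1 le2 q) (SS F ι le1 le2 q')) : le1 q q' := by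
  obtain ⟨t, ht, ⟨f⟩⟩ := h
  have hm : ∀ y, pt F (ι q) 1 y st ∈ SS F ι le1 le2 q := fun y =>
    (pt_mem F hι).2 ⟨r1 q, fun _ => one_ne_zero⟩
  have hH : IsOpenEmbedding (fun x => ((f x : SS F ι le1 le2 q') : Tot F)) :=
    (SS_clopen F ι le1 le2 q').2.isOpenEmbedding_subtypeVal.comp
      (ht.2.isOpenEmbedding_subtypeVal.comp f.isOpenEmbedding)
  obtain ⟨n, h⟩ := land_open F _ hH (ι q) 1 hm
  have h1 := (f ⟨_, hm (F.e _ 0)⟩ : SS F ι le1 le2 q').2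
  rw [h] at h1
  exact ((pt_mem F hι).1 h1).1

lemma clopen_of_le1 (hι : Function.Injective ι) (t1 : ∀ a b c, le1 a b → le1 b c → le1 a c)
    (t2 : ∀ a b c, le2 a b → le2 b c → le2 a c) (h12 : ∀ q q', le1 q q' → le2 q q')
    {q q' : Q} (h : le1 q q') :
    HomeoToClopenSubset (SS F ι le1 le2 q) (SS F ι le1 le2 q') := by
  classical
  let φ : ∀ i, Gad (F.g i) × Cp → Gad (F.g i) × Cp := fun i => if i = ι q' then shs else id
  have hφ : ∀ i, IsOpenEmbedding (φ i) ∧ IsClosedEmbedding (φ i) := by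
    intro i
    by_cases hi : i = ι q'
    · simp only [φ, hi, if_true]; exact shs_emb
    · simp only [φ, hi, if_false]; exact ⟨IsOpenEmbedding.id, IsClosedEmbedding.id⟩
  let Φ : Tot F → Tot F := Sigma.map id φ
  have hΦo : IsOpenEmbedding Φ :=
    (isOpenEmbedding_sigmaMap Function.injective_id).2 fun i => (hφ i).1
  have hΦc : IsClosedEmbedding Φ := by
    refine ⟨hΦo.isEmbedding, ?_⟩
    rw [isClosed_sigma_iff]
    intro i
    have : Sigma.mk i ⁻¹' range Φ = range (φ i) := by
      ext w
      constructor
      · rintro ⟨⟨j, v⟩, hv⟩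
        obtain rfl : j = i := (Sigma.mk.inj hv).1
        exact ⟨v, eq_of_heq (Sigma.mk.inj hv).2⟩
      · rintro ⟨v, rfl⟩
        exact ⟨⟨i, v⟩, rfl⟩
    rw [this]
    exact (hφ i).2.isClosed_range
  have hm : MapsTo Φ (SS F ι le1 le2 q) (SS F ι le1 le2 q') := by
    rintro ⟨i, a, c⟩ ⟨p, hp, hh⟩
    simp only at hp hh
    subst hp
    change (⟨ι p, φ (ι p) (a, c)⟩ : Tot F) ∈ SS F ι le1 le2 q'
    refine ⟨p, rfl, ?_⟩
    by_cases hpq : p = q'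
    · subst hpq
      simp only [φ, if_true]
      by_cases hc : c = st
      · left
        have : shs (a, c) = (a.sh, c) := if_pos hc
        rw [this]
        rcases hh with hh | hh
        · refine ⟨hc, t1 _ _ _ hh.2.1 h, fun _ => ?_⟩
          have : a.sh ∈ range (Gad.sh (g := F.g (ι p))) := ⟨a, rfl⟩
          rw [Gad.range_sh] at this
          exact this.1
        · exact absurd hc hh.1
      · right
        have : shs (a, c) = (a, c) := if_neg hc
        rw [this]
        rcases hh with hh | hh
        · exact absurd hh.1 hc
        · exact ⟨hc, t2 _ _ _ hh.2 (h12 _ _ h)⟩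
    · have : φ (ι p) = id := if_neg fun he => hpq (hι he)
      rw [this]
      rcases hh with hh | hh
      · exact Or.inl ⟨hh.1, t1 _ _ _ hh.2.1 h, fun he => absurd he hpq⟩
      · exact Or.inr ⟨hh.1, t2 _ _ _ hh.2 (h12 _ _ h)⟩
  exact homeo_clopen_of _ (restr_open (SS_clopen F ι le1 le2 q) (SS_clopen F ι le1 le2 q') Φ hΦo hm)
    (restr_closed (SS_clopen F ι le1 le2 q) Φ hΦc hm)

lemma closed_of_le2
    (t2 : ∀ a b c, le2 a b → le2 b c → le2 a c) (h12 : ∀ q q', le1 q q' → le2 q q')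
    {q q' : Q} (h : le2 q q') :
    HomeoToClosedSubset (SS F ι le1 le2 q) (SS F ι le1 le2 q') := by
  let φ : ∀ i, Gad (F.g i) × Cp → Gad (F.g i) × Cp := fun i => Prod.map id kap
  have hφ : ∀ i, IsClosedEmbedding (φ i) := fun i => IsClosedEmbedding.id.prodMap kap_emb
  let Φ : Tot F → Tot F := Sigma.map id φ
  have hΦc : IsClosedEmbedding Φ := by
    refine ⟨(isEmbedding_sigmaMap Function.injective_id).2 fun i => (hφ i).isEmbedding, ?_⟩
    rw [isClosed_sigma_iff]
    intro i
    have : Sigma.mk i ⁻¹' range Φ = range (φ i) := by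
      ext w
      constructor
      · rintro ⟨⟨j, v⟩, hv⟩
        obtain rfl : j = i := (Sigma.mk.inj hv).1
        exact ⟨v, eq_of_heq (Sigma.mk.inj hv).2⟩
      · rintro ⟨v, rfl⟩
        exact ⟨⟨i, v⟩, rfl⟩
    rw [this]
    exact (hφ i).isClosed_range
  have hm : MapsTo Φ (SS F ι le1 le2 q) (SS F ι le1 le2 q') := by
    rintro ⟨i, a, c⟩ ⟨p, hp, hh⟩
    refine ⟨p, hp, Or.inr ⟨kap_ne c, ?_⟩⟩
    rcases hh with hh | hh
    · exact t2 _ _ _ (h12 _ _ hh.2.1) h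
    · exact t2 _ _ _ hh.2 h
  exact homeo_closed_of _ (restr_closed (SS_clopen F ι le1 le2 q) Φ hΦc hm)

/-- the counting argument -/
lemma counting (σ ρ : ℕ → ℕ) (h1 : ∀ n, 1 ≤ n → ρ (σ n) = n) (h2 : ∀ n, σ (ρ n) = n)
    (h3 : ∀ n, 1 ≤ ρ n) (k : ℤ) (N : ℕ) (hN : ∀ n, N ≤ n → (σ n + 2 * k).toNat = n) : False := by
  obtain ⟨N', hN1, hN2, hN3⟩ : ∃ N', N ≤ N' ∧ 1 ≤ N' ∧ 2 * k.natAbs ≤ N' :=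
    ⟨N + 1 + 2 * k.natAbs, by omega, by omega, by omega⟩
  have hs : ∀ n, N' ≤ n → (σ n : ℤ) = n - 2 * k := by
    intro n hn
    have := hN n (hN1.trans hn)
    omega
  have hcard : (Finset.Ico 1 N').card = (Finset.range (N' - 2 * k).toNat).card := by
    refine Finset.card_nbij' σ ρ ?_ ?_ ?_ ?_
    · intro n hn
      simp only [Finset.coe_Ico, Finset.coe_range, mem_Ico, mem_Iio] at hn ⊢
      by_contra hc
      push Not at hc
      have h4 : N' ≤ (σ n + 2 * k).toNat := by omega
      have h5 := hs _ h4
      have h6 : σ (σ n + 2 * k).toNat = σ n := by omega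
      have h7 := h1 (σ n + 2 * k).toNat (by omega)
      rw [h6, h1 n hn.1] at h7
      omega
    · intro n hn
      simp only [Finset.coe_Ico, Finset.coe_range, mem_Ico, mem_Iio] at hn ⊢
      refine ⟨h3 n, ?_⟩
      by_contra hc
      push Not at hc
      have h5 := hs _ hc
      rw [h2] at h5
      omega
    · intro n hn
      simp only [Finset.coe_Ico, mem_Ico] at hn
      exact h1 n hn.1
    · intro n _
      exact h2 n
  simp only [Nat.card_Ico, Finset.card_range] at hcard
  omega

lemma nonhomeo (hι : Function.Injective ι) (r1 : ∀ q, le1 q q) {q q' : Q} (hne : q ≠ q') :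
    IsEmpty ((SS F ι le1 le2 q) ≃ₜ (SS F ι le1 le2 q')) := by
  constructor
  intro h
  have hle : le1 q q' := le1_of_clopen F hι r1
    (homeo_clopen_of h h.isOpenEmbedding h.isClosedEmbedding)
  have hm : ∀ n, 1 ≤ n → ∀ y, pt F (ι q) n y st ∈ SS F ι le1 le2 q := fun n hn y =>
    (pt_mem F hι).2 ⟨r1 q, fun _ => by omega⟩
  have hm' : ∀ n y, pt F (ι q) n y st ∈ SS F ι le1 le2 q' := fun n y =>
    (pt_mem F hι).2 ⟨hle, fun he => absurd he hne⟩
  have hs : ∀ n, ∃ n', ∀ hn : 1 ≤ n, ∀ y, (h ⟨_, hm n hn y⟩ : Tot F) = pt F (ι q) n' y st := by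
    intro n
    by_cases hn : 1 ≤ n
    · obtain ⟨n', h'⟩ := land_open F (fun x => (h x : Tot F))
        ((SS_clopen F ι le1 le2 q').2.isOpenEmbedding_subtypeVal.comp h.isOpenEmbedding) (ι q) n
        (hm n hn)
      exact ⟨n', fun _ => h'⟩
    · exact ⟨0, fun h => absurd h hn⟩
  choose σ hσ using hs
  have hr : ∀ n, ∃ n', ∀ y, (h.symm ⟨_, hm' n y⟩ : Tot F) = pt F (ι q) n' y st := fun n =>
    land_open F (fun x => (h.symm x : Tot F))
        ((SS_clopen F ι le1 le2 q).2.isOpenEmbedding_subtypeVal.comp h.symm.isOpenEmbedding) (ι q) n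
        (hm' n)
  choose ρ hρ using hr
  have h3 : ∀ n, 1 ≤ ρ n := by
    intro n
    have h1 := (h.symm ⟨_, hm' n (F.e _ 0)⟩).2
    rw [hρ] at h1
    have := ((pt_mem F hι).1 h1).2 rfl
    omega
  have h1 : ∀ n, 1 ≤ n → ρ (σ n) = n := by
    intro n hn
    have e1 : h ⟨_, hm n hn (F.e _ 0)⟩ = ⟨_, hm' (σ n) (F.e _ 0)⟩ := Subtype.ext (hσ n hn _)
    have e2 := hρ (σ n) (F.e _ 0)
    rw [← e1, h.symm_apply_apply] at e2
    exact (pt_inj F e2).1.symm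
  have h2 : ∀ n, σ (ρ n) = n := by
    intro n
    have e1 : h.symm ⟨_, hm' n (F.e _ 0)⟩ = ⟨_, hm (ρ n) (h3 n) (F.e _ 0)⟩ := Subtype.ext (hρ n _)
    have e2 := hσ (ρ n) (h3 n) (F.e _ 0)
    rw [← e1, h.apply_symm_apply] at e2
    exact (pt_inj F e2).1.symm
  -- the limit point
  have hx0 : (⟨ι q, Gad.X (F.g (ι q)) 0, st⟩ : Tot F) ∈ SS F ι le1 le2 q :=
    ⟨q, rfl, Or.inl ⟨rfl, r1 q, fun _ => by simp⟩⟩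
  have ht0 : Tendsto (fun n : ℕ => pt F (ι q) n (F.e (ι q) n) st) atTop
      (𝓝 ⟨ι q, Gad.X (F.g (ι q)) 0, st⟩) := by
    have := (continuous_sigmaMk (σ := fun i => Gad (F.g i) × Cp)
      (i := ι q)).continuousAt.tendsto.comp
        ((Gad.tendsto_X (F.ge (ι q)) 0).prodMk_nhds (tendsto_const_nhds (x := st)))
    refine this.congr fun n => ?_
    simp [pt]
  have ht1 : Tendsto (fun n : ℕ => (⟨_, hm (n + 1) (by omega) (F.e (ι q) (n + 1))⟩ : SS F ι le1 le2 q))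
      atTop (𝓝 ⟨_, hx0⟩) := by
    rw [tendsto_subtype_rng]
    exact ht0.comp (tendsto_add_atTop_nat 1)
  have ht2 : Tendsto (fun n : ℕ => pt F (ι q) (σ (n + 1)) (F.e (ι q) (n + 1)) st) atTop
      (𝓝 (h ⟨_, hx0⟩ : Tot F)) := by
    have := (continuous_subtype_val.tendsto _).comp ((h.continuous.tendsto _).comp ht1)
    refine this.congr fun n => ?_
    exact hσ (n + 1) (by omega) _
  obtain ⟨⟨a, c⟩, hac⟩ : (h ⟨_, hx0⟩ : Tot F) ∈ range (Sigma.mk (ι q)) :=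
    isClosed_range_sigmaMk.mem_of_tendsto ht2 (Eventually.of_forall fun n => ⟨_, rfl⟩)
  rw [← hac] at ht2
  have ht3 : Tendsto (fun n : ℕ => (Gad.E (F.g (ι q)) (σ (n + 1)) (F.e (ι q) (n + 1)), st)) atTop
      (𝓝 (a, c)) :=
    (IsEmbedding.sigmaMk (σ := fun i => Gad (F.g i) × Cp) (i := ι q)).tendsto_nhds_iff.2 ht2
  have ht4 : Tendsto (fun n : ℕ => Gad.E (F.g (ι q)) (σ (n + 1)) (F.e (ι q) (n + 1))) atTop
      (𝓝 a) := (continuous_fst.tendsto _).comp ht3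
  rcases Gad.cases a with ⟨k, rfl⟩ | ⟨m, y, rfl⟩
  · have hch := ((Gad.cch k).tendsto _).comp ht4
    have hev := hch.eventually (lt_mem_nhds (show (1/2 : ℝ) < Gad.ch k (Gad.X (F.g (ι q)) k) by
      simp [Gad.ch_X]; norm_num))
    obtain ⟨N, hN⟩ := eventually_atTop.1 hev
    refine counting σ ρ h1 h2 h3 k (N + 1) ?_
    intro n hn
    have := hN (n - 1) (by omega)
    simp only [Function.comp, Nat.sub_add_cancel (show 1 ≤ n by omega), Gad.ch_E, F.ge] at this
    by_contra hc
    rw [if_neg hc] at this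
    norm_num at this
  · have hev := ht4.eventually ((Gad.clopen_lev m).2.mem_nhds (by simp))
    obtain ⟨N, hN⟩ := eventually_atTop.1 hev
    have e1 := hN N le_rfl
    have e2 := hN (N + 1) (by omega)
    simp only [mem_setOf_eq, Gad.lev_E, Option.some.injEq] at e1 e2
    have f1 := h1 (N + 1) (by omega)
    have f2 := h1 (N + 1 + 1) (by omega)
    rw [e1] at f1
    rw [e2] at f2
    omega

end
end RepQ

open Cardinal Set Topology Filter RepQ

theorem statement1 (α : Cardinal.{u}) (hα : Cardinal.continuum ≤ α) :
    ∃ (X : Type u) (tX : TopologicalSpace X),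
      @TopologicalSpace.MetrizableSpace X tX ∧ #X = α ∧
      @RepresentsPairsNoIsolated α X tX := by
  have hα0 : ℵ₀ ≤ α := aleph0_le_continuum.trans hα
  let I := α.ord.ToType
  haveI : NoMaxOrder I := Cardinal.noMaxOrder hα0
  have hI : #I = α := mk_ord_toType α
  haveI : Nonempty I := by
    rw [← mk_ne_zero_iff, hI]
    exact (aleph0_pos.trans_le hα0).ne'
  obtain ⟨Y, tY, hY, hYc, ⟨F⟩⟩ := exists_fam α hα I hI
  have hmet : TopologicalSpace.MetrizableSpace (Tot F) := by
    haveI : TopologicalSpace.MetrizableSpace Cp := metrizable_sum _ _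
    haveI : ∀ i, TopologicalSpace.MetrizableSpace (Gad (F.g i)) := fun i => Gad.metrizable
    exact metrizable_sigma _
  refine ⟨Tot F, inferInstance, hmet, ?_, ?_⟩
  · apply le_antisymm
    · have hG : ∀ i, #(Gad (F.g i) × Cp) ≤ α := by
        intro i
        have e1 : #(Gad (F.g i)) ≤ α := by
          have : #(Gad (F.g i)) = #(ℤ ⊕ (ℕ × Y i)) := rfl
          rw [this, mk_sum, mk_prod]
          refine add_le_of_le hα0 (by simpa using hα0) ?_
          simp only [mk_nat, lift_aleph0, lift_id, lift_id', lift_uzero]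
          exact mul_le_of_le hα0 hα0 (hYc i)
        have e2 : Cardinal.lift.{u} #Cp ≤ α := by
          have : #Cp ≤ 𝔠 := by
            rw [mk_sum]
            refine add_le_of_le aleph0_le_continuum ?_ ?_
            · simpa using one_le_aleph0.trans aleph0_le_continuum
            · simp
          calc Cardinal.lift.{u} #Cp ≤ Cardinal.lift.{u} 𝔠 := lift_le.2 this
            _ = 𝔠 := lift_continuum
            _ ≤ α := hα
        rw [mk_prod]
        refine mul_le_of_le hα0 ?_ e2
        simpa using e1
      rw [mk_sigma]
      refine (sum_le_mk_mul_iSup _).trans ?_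
      exact mul_le_of_le hα0 hI.le (ciSup_le' hG)
    · rw [← hI]
      exact mk_le_of_injective (f := fun i : I => pt F i 0 (F.e i 0) st)
        (fun i j h => congrArg Sigma.fst h)
  · intro Q le1 le2 hQ r1 t1 r2 t2 h12
    have : Nonempty (Q ↪ I) := by rw [← Cardinal.le_def, hI]; exact hQ
    obtain ⟨ι, hι⟩ := this
    refine ⟨SS F ι le1 le2, SS_clopen F ι le1 le2, fun q q' hne => nonhomeo F hι r1 hne, ?_, ?_, ?_, ?_⟩
    · intro q x ho
      have h := (SS_clopen F ι le1 le2 q).2.isOpenEmbedding_subtypeVal.isOpenMap _ ho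
      rw [image_singleton] at h
      exact noiso F _ h
    · exact fun q q' => ⟨clopen_of_le1 F hι t1 t2 h12, le1_of_clopen F hι r1⟩
    · exact fun q q' => closed_of_le2 F t2 h12
    · exact fun q q' hn h => hn (no_inj F hι h12 r1 h)
end

section
/- For every cardinal number α ≥ 𝔠, there exists a metrizable topological space X with |X| = α such that every quasiordered set (Q, ≤) with |Q| ≤ α has a representation by clopen subspaces of X with respect to continuous bijections; that is, there is a family {X(q) : q ∈ Q} of pairwise non-homeomorphic clopen subsets of X such that q ≤ q' if and only if there exists a continuous bijection from X(q) onto X(q'). -/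
universe u

open Cardinal

/-- The representation property of the space `X` for a quasiorder, with respect to
continuous bijections. -/
def RepresentsByContBij (α : Cardinal.{u}) (X : Type u) [TopologicalSpace X] : Prop :=
  ∀ (Q : Type u) (le : Q → Q → Prop), #Q ≤ α →
    (∀ q, le q q) → (∀ a b c, le a b → le b c → le a c) →
    ∃ Xq : Q → Set X,
      (∀ q, IsClopen (Xq q)) ∧
      (∀ q q', q ≠ q' → IsEmpty ((Xq q) ≃ₜ (Xq q'))) ∧
      (∀ q q', le q q' ↔
        ∃ f : (Xq q) → (Xq q'), Continuous f ∧ Function.Bijective f)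

section rank
variable {W : Type u} [LinearOrder W] [WellFoundedLT W]

/-- quasi-component of `x` in `A`. -/
def qc {X : Type u} [TopologicalSpace X] (A : Set X) (x : X) : Set X :=
  {y | y ∈ A ∧ ∀ U V : Set X, IsOpen U → IsOpen V → A ⊆ U ∪ V → A ∩ (U ∩ V) = ∅ → x ∈ U → y ∈ U}

/-- Transfinite iteration of quasi-components. -/
def TT {W : Type u} [LinearOrder W] [WellFoundedLT W] {X : Type u} [TopologicalSpace X] (x : X) (w : W) : Set X :=
  qc {y | ∀ v, v < w → y ∈ TT x v} x
termination_by (wellFounded_lt (α := W)).wrap w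
decreasing_by assumption

variable {X Y : Type u} [TopologicalSpace X] [TopologicalSpace Y]

lemma mem_TT {x y : X} {w : W} : y ∈ TT x w ↔ y ∈ qc {y | ∀ v : W, v < w → y ∈ TT x v} x := by
  rw [TT]

lemma qc_map {f : X → Y} (hf : Continuous f) {A : Set X} {B : Set Y} (h : ∀ y ∈ A, f y ∈ B)
    {x y : X} (hy : y ∈ qc A x) : f y ∈ qc B (f x) := by
  refine ⟨h y hy.1, fun U V hU hV hc hd hx => ?_⟩
  refine hy.2 (f ⁻¹' U) (f ⁻¹' V) (hU.preimage hf) (hV.preimage hf) (fun z hz => hc (h z hz)) ?_ hx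
  ext z
  simp only [Set.mem_inter_iff, Set.mem_preimage, Set.mem_empty_iff_false, iff_false]
  intro hz
  have : f z ∈ B ∩ (U ∩ V) := ⟨h z hz.1, hz.2⟩
  rw [hd] at this
  exact this

lemma TT_map {f : X → Y} (hf : Continuous f) {x : X} (w : W) :
    ∀ {y : X}, y ∈ TT x w → f y ∈ TT (f x) w := by
  induction w using WellFoundedLT.induction with
  | ind w ih =>
    intro y hy
    rw [mem_TT] at hy ⊢
    exact qc_map hf (A := {y | ∀ v : W, v < w → y ∈ TT x v})
      (B := {y | ∀ v : W, v < w → y ∈ TT (f x) v})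
      (fun z hz v hv => ih v hv (hz v hv)) hy

lemma TT_conn {S : Set X} (hS : IsPreconnected S) {x : X} (hx : x ∈ S) (w : W) : S ⊆ TT x w := by
  induction w using WellFoundedLT.induction with
  | ind w ih =>
    intro y hy
    rw [mem_TT]
    refine ⟨fun v hv => ih v hv hy, fun U V hU hV hc hd hxU => ?_⟩
    have hSA : S ⊆ {y | ∀ v : W, v < w → y ∈ TT x v} := fun z hz v hv => ih v hv hz
    by_contra hyU
    have hyV : y ∈ V := (hc (hSA hy)).resolve_left hyU
    obtain ⟨z, hz, hz'⟩ := hS U V hU hV (hSA.trans hc) ⟨x, hx, hxU⟩ ⟨y, hy, hyV⟩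
    have : z ∈ {y | ∀ v : W, v < w → y ∈ TT x v} ∩ (U ∩ V) := ⟨hSA hz, hz'⟩
    rw [hd] at this
    exact this

lemma self_mem_TT (x : X) (w : W) : x ∈ TT x w :=
  TT_conn (isPreconnected_singleton (x := x)) rfl w rfl

lemma TT_clopen {C : Set X} (hC : IsClopen C) {x y : X} (hx : x ∈ C) {w : W} (hy : y ∈ TT x w) :
    y ∈ C := by
  rw [mem_TT] at hy
  exact hy.2 C Cᶜ hC.isOpen hC.compl.isOpen (by simp) (by simp) hx
end rank


lemma sigma_metrizable {ι : Type u} {Y : ι → Type u} [t : ∀ i, TopologicalSpace (Y i)]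
    [h : ∀ i, TopologicalSpace.MetrizableSpace (Y i)] :
    TopologicalSpace.MetrizableSpace (Σ i, Y i) := by
  let _ : ∀ i, MetricSpace (Y i) := fun i => TopologicalSpace.metrizableSpaceMetric (Y i)
  let _ : MetricSpace (Σ i, Y i) := Metric.Sigma.metricSpace
  infer_instance

section space
open Classical Filter Topology

/-- finitely supported bounded families with sup norm -/
def EE (W : Type u) : Submodule ℝ (lp (fun _ : Option W => ℝ) ⊤) where
  carrier := {x | (Function.support (x : Option W → ℝ)).Finite}
  add_mem' := by
    intro a b ha hb
    refine (Set.Finite.union ha hb).subset ?_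
    rw [lp.coeFn_add]
    exact Function.support_add _ _
  zero_mem' := by
    change (Function.support (0 : Option W → ℝ)).Finite
    rw [Function.support_zero]
    exact Set.finite_empty
  smul_mem' := by
    intro c x hx
    refine Set.Finite.subset hx ?_
    rw [lp.coeFn_smul]
    exact Function.support_const_smul_subset _ _

variable {W : Type u}

instance instEEadd : ContinuousAdd (EE W) :=
  (inferInstance : ContinuousAdd (EE W).toAddSubgroup)
/-- coordinates -/
def co (x : EE W) (i : Option W) : ℝ := (x : lp (fun _ : Option W => ℝ) ⊤) i

lemma co_add (x y : EE W) (i) : co (x + y) i = co x i + co y i := rfl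
lemma co_smul (c : ℝ) (x : EE W) (i) : co (c • x) i = c * co x i := rfl
lemma co_zero (i) : co (0 : EE W) i = 0 := rfl

lemma co_ext {x y : EE W} (h : ∀ i, co x i = co y i) : x = y := by
  apply Subtype.ext
  apply lp.ext
  exact funext h

lemma continuous_co (i : Option W) : Continuous (fun x : EE W => co x i) := by
  have h : LipschitzWith 1 (fun x : EE W => co x i) := by
    apply LipschitzWith.of_dist_le_mul
    intro x y
    rw [dist_eq_norm, dist_eq_norm]
    have := lp.norm_apply_le_norm (ENNReal.top_ne_zero)
      ((x - y : EE W) : lp (fun _ : Option W => ℝ) ⊤) i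
    simpa [co] using this
  exact h.continuous

/-- basis vectors -/
noncomputable def ee (i : Option W) : EE W := ⟨lp.single ⊤ i (1 : ℝ), by
  refine (Set.finite_singleton i).subset ?_
  intro j hj
  by_contra hne
  exact hj (lp.single_apply_ne (E := fun _ : Option W => ℝ) ⊤ i (1 : ℝ) hne)⟩

lemma co_ee_self (i : Option W) : co (ee i) i = 1 := lp.single_apply_self (E := fun _ : Option W => ℝ) ⊤ i (1 : ℝ)
lemma co_ee_ne {i j : Option W} (h : j ≠ i) : co (ee i) j = 0 := lp.single_apply_ne (E := fun _ : Option W => ℝ) ⊤ i (1 : ℝ) h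

lemma card_EE [Infinite W] : #(EE W) ≤ max #W Cardinal.continuum := by
  let F : EE W → (Option W →₀ ℝ) := fun x =>
    Finsupp.ofSupportFinite (co x) x.2
  have hF : Function.Injective F := by
    intro x y hxy
    apply co_ext
    intro i
    exact DFunLike.congr_fun hxy i
  refine (Cardinal.mk_le_of_injective hF).trans ?_
  rw [mk_finsupp_lift_of_infinite]
  have : #(Option W) = #W := by
    rw [Cardinal.mk_option]; exact Cardinal.add_one_eq (Cardinal.aleph0_le_mk W)
  simp [this, Cardinal.mk_real]

variable [LinearOrder W]

/-- The underlying set. -/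
def GG (W : Type u) [LinearOrder W] : Type u :=
  {z : Option (W × ℕ) × EE W // (z.1 = none ∧ z.2 = 0) ∨
    ∃ δ n, z.1 = some (δ, n) ∧ co z.2 (some δ) = 1 / ((n : ℝ) + 1) ∧
      ∀ γ, γ < δ → co z.2 (some γ) = 0}

/-- key -/
def GG.key (x : GG W) : Option (W × ℕ) := x.1.1
/-- vector -/
noncomputable def GG.vec (x : GG W) : EE W := x.1.2
/-- special point -/
noncomputable def GG.pt : GG W := ⟨(none, 0), Or.inl ⟨rfl, rfl⟩⟩

lemma GG.cases (x : GG W) : x = GG.pt ∨ ∃ δ n, x.key = some (δ, n) ∧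
    co x.vec (some δ) = 1 / ((n : ℝ) + 1) ∧ ∀ γ, γ < δ → co x.vec (some γ) = 0 := by
  rcases x.2 with h | h
  · left
    apply Subtype.ext
    exact Prod.ext h.1 h.2
  · right; exact h

lemma GG.vec_inj : Function.Injective (GG.vec : GG W → EE W) := by
  have pos : ∀ n : ℕ, (1 / ((n : ℝ) + 1)) ≠ 0 := fun n => by positivity
  intro x y h
  rcases x.cases with hx | ⟨δ, n, hk, h1, h2⟩ <;> rcases y.cases with hy | ⟨δ', n', hk', h1', h2'⟩
  · rw [hx, hy]
  · rw [← h, hx] at h1'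
    exact absurd h1'.symm (pos n')
  · rw [h, hy] at h1
    exact absurd h1.symm (pos n)
  · rw [h] at h1 h2
    have hd : δ = δ' := by
      rcases lt_trichotomy δ δ' with hl | hl | hl
      · exact absurd (h1.symm.trans (h2' _ hl)) (pos n)
      · exact hl
      · exact absurd (h1'.symm.trans (h2 _ hl)) (pos n')
    subst hd
    have hn : n = n' := by
      rw [h1] at h1'
      have := inv_injective (by simpa only [one_div] using h1')
      exact_mod_cast (add_right_cancel this)
    subst hn
    apply Subtype.ext
    exact Prod.ext (hk.trans hk'.symm) h

/-- decoupling label -/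
noncomputable def lam (w : W) : Option (W × ℕ) → Option (W × ℕ)
  | none => none
  | some (δ, n) => if δ ≤ w then none else some (δ, n)

lemma lam_lam {w w' : W} (h : w ≤ w') (k : Option (W × ℕ)) : lam w' (lam w k) = lam w' k := by
  rcases k with _ | ⟨δ, n⟩
  · rfl
  · by_cases hd : δ ≤ w
    · simp [lam, hd, hd.trans h]
    · simp [lam, hd]

/-- The space with label `w`. -/
def YY (w : W) : Type u := let _ := w; GG W

/-- chart -/
noncomputable def YY.emb (w : W) (x : YY w) : EE W × Option (W × ℕ) :=
  (GG.vec x, lam w (GG.key x))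

noncomputable instance (w : W) : TopologicalSpace (YY w) :=
  TopologicalSpace.induced (YY.emb w)
    (@instTopologicalSpaceProd _ _ inferInstance (⊥ : TopologicalSpace (Option (W × ℕ))))

local instance instOptTop : TopologicalSpace (Option (W × ℕ)) := ⊥
local instance instOptDisc : DiscreteTopology (Option (W × ℕ)) := ⟨rfl⟩

lemma YY.isInducing (w : W) : IsInducing (YY.emb w) := ⟨rfl⟩

lemma YY.continuous_iff {w : W} {Z : Type*} [TopologicalSpace Z] {f : Z → YY w} :
    Continuous f ↔ Continuous (fun z => GG.vec (f z)) ∧ Continuous (fun z => lam w (GG.key (f z))) := by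
  rw [(YY.isInducing w).continuous_iff]
  exact continuous_prodMk

lemma YY.continuous_vec (w : W) : Continuous (fun x : YY w => GG.vec x) :=
  (YY.continuous_iff.1 continuous_id).1

lemma YY.continuous_lam (w : W) : Continuous (fun x : YY w => lam w (GG.key x)) :=
  (YY.continuous_iff.1 continuous_id).2

instance (w : W) : TopologicalSpace.MetrizableSpace (YY w) := by
  have : IsEmbedding (YY.emb w) := ⟨YY.isInducing w, fun x y h =>
    GG.vec_inj (congrArg Prod.fst h)⟩
  exact this.metrizableSpace

lemma YY.continuous_le {w w' : W} (h : w ≤ w') :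
    Continuous (fun x : YY w => (show YY w' from (show GG W from x))) := by
  rw [YY.continuous_iff]
  refine ⟨YY.continuous_vec w, ?_⟩
  have := (continuous_of_discreteTopology (f := lam w')).comp (YY.continuous_lam w)
  refine this.congr ?_
  intro x
  exact lam_lam h _

/-- special point -/
noncomputable def YY.pt (w : W) : YY w := (GG.pt : GG W)

variable [WellFoundedLT W]

lemma YY.nonspecial {w : W} {x : YY w} (hx : x ≠ YY.pt w) (v : W) : ∃ y ∈ TT x v, y ≠ x := by
  rcases GG.cases x with h | ⟨δ, n, hk, h1, h2⟩
  · exact absurd h hx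
  let f : ℝ → YY w := fun t => ⟨(some (δ, n), GG.vec x + t • ee none), Or.inr ⟨δ, n, rfl, by
    simp only [co_add, co_smul, co_ee_ne (Option.some_ne_none δ), h1]; ring, fun γ hγ => by
    simp only [co_add, co_smul, co_ee_ne (Option.some_ne_none γ), h2 γ hγ]; ring⟩⟩
  have hf : Continuous f := by
    rw [YY.continuous_iff]
    refine ⟨?_, continuous_const⟩
    change Continuous (fun t : ℝ => GG.vec x + t • (ee none : EE W))
    fun_prop
  have h0 : f 0 = x := by
    apply GG.vec_inj
    change GG.vec x + (0 : ℝ) • (ee none : EE W) = GG.vec x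
    simp
  refine ⟨f 1, TT_conn (isPreconnected_range hf) ⟨0, h0⟩ v ⟨1, rfl⟩, ?_⟩
  intro h
  have : co (GG.vec x + (1 : ℝ) • (ee none : EE W)) none = co (GG.vec x) none := by
    exact congrArg (fun z : YY w => co (GG.vec z) none) h
  simp [co_add, co_ee_self] at this

lemma YY.lower {w : W} (v : W) : ∀ x : YY w, ∀ δ n, GG.key x = some (δ, n) → v < δ → δ ≤ w →
    x ∈ TT (YY.pt w) v := by
  induction v using WellFoundedLT.induction with
  | ind v ih =>
    intro x δ n hk hvδ hδw
    have hvw : v ≤ w := (hvδ.trans_le hδw).le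
    have hx0 : ∀ γ, γ ≤ v → co (GG.vec x) (some γ) = 0 := by
      intro γ hγ
      rcases GG.cases x with h | ⟨δ', n', hk', h1, h2⟩
      · rw [h]; rfl
      · rw [hk] at hk'
        simp only [Option.some.injEq, Prod.mk.injEq] at hk'
        exact h2 γ (hk'.1 ▸ hγ.trans_lt hvδ)
    let F : ℕ → ℝ → YY w := fun m t =>
      ⟨(some (v, m), t • GG.vec x + (1 / ((m : ℝ) + 1)) • ee (some v)), Or.inr ⟨v, m, rfl, by
        simp only [co_add, co_smul, co_ee_self, hx0 v le_rfl]; ring, fun γ hγ => by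
        have : (some γ : Option W) ≠ some v := by simpa using hγ.ne
        simp only [co_add, co_smul, co_ee_ne this, hx0 γ hγ.le]; ring⟩⟩
    have hF : ∀ m, Continuous (F m) := by
      intro m
      rw [YY.continuous_iff]
      refine ⟨?_, continuous_const⟩
      change Continuous (fun t : ℝ => t • GG.vec x + (1 / ((m : ℝ) + 1)) • (ee (some v) : EE W))
      fun_prop
    have hlim : ∀ (t : ℝ) (y : YY w), GG.vec y = t • GG.vec x → lam w (GG.key y) = none →
        Tendsto (fun m => F m t) atTop (𝓝 y) := by
      intro t y hy hl
      rw [(YY.isInducing w).tendsto_nhds_iff]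
      have e : ((YY.emb w) ∘ fun m => F m t) =
          fun m : ℕ => (t • GG.vec x + (1 / ((m : ℝ) + 1)) • (ee (some v) : EE W), none) := by
        funext m
        refine Prod.ext rfl ?_
        change lam w (some (v, m)) = none
        simp [lam, hvw]
      have e2 : YY.emb w y = (t • GG.vec x + (0 : ℝ) • (ee (some v) : EE W), none) := by
        refine Prod.ext ?_ hl
        change GG.vec y = _
        simp [hy]
      rw [e, e2]
      refine Tendsto.prodMk_nhds ?_ tendsto_const_nhds
      exact tendsto_const_nhds.add ((tendsto_one_div_add_atTop_nhds_zero_nat).smul_const _)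
    have hlimp := hlim 0 (YY.pt w) (by simp [GG.vec, YY.pt, GG.pt]) rfl
    have hlimx := hlim 1 x (by simp) (by rw [hk]; simp [lam, hδw])
    rw [mem_TT]
    have hxA : x ∈ {y : YY w | ∀ u : W, u < v → y ∈ TT (YY.pt w) u} := fun u hu =>
      ih u hu x δ n hk (hu.trans hvδ) hδw
    refine ⟨hxA, fun U V hU hV hc hd hp => ?_⟩
    by_contra hxU
    have hxV : x ∈ V := (hc hxA).resolve_left hxU
    obtain ⟨m, hm1, hm2⟩ :=
      ((hlimp.eventually (hU.mem_nhds hp)).and (hlimx.eventually (hV.mem_nhds hxV))).exists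
    have hsub : Set.range (F m) ⊆ {y : YY w | ∀ u : W, u < v → y ∈ TT (YY.pt w) u} := by
      rintro _ ⟨t, rfl⟩ u hu
      exact ih u hu _ v m rfl hu hvw
    obtain ⟨z, hz, hz'⟩ := isPreconnected_range (hF m) U V hU hV (hsub.trans hc)
      ⟨_, ⟨0, rfl⟩, hm1⟩ ⟨_, ⟨1, rfl⟩, hm2⟩
    have : z ∈ {y : YY w | ∀ u : W, u < v → y ∈ TT (YY.pt w) u} ∩ (U ∩ V) := ⟨hsub hz, hz'⟩
    rw [hd] at this
    exact this

lemma YY.special_lower {w v : W} (h : v < w) : ∃ y ∈ TT (YY.pt w) v, y ≠ YY.pt w := by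
  let x : YY w := ⟨(some (w, 0), ee (some w)), Or.inr ⟨w, 0, rfl, by simp [co_ee_self],
    fun γ hγ => co_ee_ne (by simpa using hγ.ne)⟩⟩
  refine ⟨x, YY.lower v x w 0 rfl h le_rfl, ?_⟩
  intro hx
  have : GG.key x = GG.key (GG.pt : GG W) := congrArg GG.key hx
  exact absurd this (Option.some_ne_none _)

lemma YY.upper {w : W} (v : W) : ∀ x : YY w, x ∈ TT (YY.pt w) v → ∀ δ n,
    GG.key x = some (δ, n) → v < δ ∧ δ ≤ w := by
  induction v using WellFoundedLT.induction with
  | ind v ih =>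
    intro x hx δ n hk
    have hδw : δ ≤ w := by
      have hC : IsClopen {z : YY w | lam w (GG.key z) = none} :=
        (isClopen_discrete {none}).preimage (YY.continuous_lam w)
      have := TT_clopen hC (x := YY.pt w) rfl hx
      simp only [Set.mem_ofPred_eq, hk, lam] at this
      by_contra hn
      simp [hn] at this
    refine ⟨?_, hδw⟩
    rw [mem_TT] at hx
    have key : ∀ z : YY w, z ∈ {y : YY w | ∀ u : W, u < v → y ∈ TT (YY.pt w) u} →
        ∀ δ n, GG.key z = some (δ, n) → v ≤ δ := by
      intro z hz δ n hk
      by_contra hn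
      exact absurd (ih δ (not_le.1 hn) z (hz δ (not_le.1 hn)) δ n hk).1 (lt_irrefl _)
    refine lt_of_le_of_ne (key x hx.1 δ n hk) ?_
    rintro rfl
    set c : ℝ := 2 / (2 * (n : ℝ) + 3) with hc
    have hc0 : 0 < c := by positivity
    have hcont : Continuous (fun z : YY w => co (GG.vec z) (some v)) :=
      (continuous_co _).comp (YY.continuous_vec w)
    have hxU := hx.2 {z | co (GG.vec z) (some v) < c} {z | c < co (GG.vec z) (some v)}
      (isOpen_lt hcont continuous_const) (isOpen_lt continuous_const hcont) ?_ ?_ ?_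
    · rcases GG.cases x with h | ⟨δ', n', hk', h1, h2⟩
      · rw [h] at hk; exact absurd hk (Option.some_ne_none _).symm
      · rw [hk] at hk'
        simp only [Option.some.injEq, Prod.mk.injEq] at hk'
        obtain ⟨rfl, rfl⟩ := hk'
        simp only [Set.mem_ofPred_eq, h1, hc] at hxU
        rw [div_lt_div_iff₀ (by positivity) (by positivity)] at hxU
        linarith
    · intro z hz
      rcases GG.cases z with h | ⟨δ', n', hk', h1, h2⟩
      · left; rw [h]; exact hc0
      · rcases (key z hz δ' n' hk').lt_or_eq with hlt | heq
        · left
          change co (GG.vec z) (some v) < c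
          rw [h2 v hlt]; exact hc0
        · subst heq
          have : co (GG.vec z) (some v) ≠ c := by
            rw [h1, hc]
            intro he
            rw [div_eq_div_iff (by positivity) (by positivity)] at he
            have : 2 * n + 3 = 2 * (n' + 1) := by
              have h' : (2 * (n : ℝ) + 3) = 2 * ((n' : ℝ) + 1) := by linarith
              exact_mod_cast h'
            omega
          exact lt_or_gt_of_ne this
    · ext z
      simp only [Set.mem_inter_iff, Set.mem_ofPred_eq, Set.mem_empty_iff_false, iff_false]
      rintro ⟨_, h1, h2⟩
      exact lt_asymm h1 h2
    · exact hc0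

lemma YY.special_upper {w : W} {y : YY w} (hy : y ∈ TT (YY.pt w) w) : y = YY.pt w := by
  rcases GG.cases y with h | ⟨δ, n, hk, -, -⟩
  · exact h
  · have := YY.upper w y hy δ n hk
    exact absurd (this.1.trans_le this.2) (lt_irrefl _)

end space

section total
variable {K W : Type u} [LinearOrder W]

/-- The big space. -/
abbrev XX (K W : Type u) [LinearOrder W] : Type u := Σ z : K × W, YY z.2

/-- The clopen subspace given by a choice of ranks. -/
def SS (ρ : K → W) : Set (XX K W) := {z | z.1.2 = ρ z.1.1}

lemma clopen_fst (P : K × W → Prop) : IsClopen {z : XX K W | P z.1} := by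
  have key : ∀ P : K × W → Prop, IsOpen {z : XX K W | P z.1} := by
    intro P
    rw [isOpen_sigma_iff]
    intro i
    by_cases h : P i
    · convert isOpen_univ
      ext y
      simp [h]
    · convert isOpen_empty
      ext y
      simp [h]
  refine ⟨⟨?_⟩, key P⟩
  exact key (fun z => ¬ P z)

lemma SS_clopen (ρ : K → W) : IsClopen (SS ρ) := clopen_fst (fun z => z.2 = ρ z.1)

/-- Inclusion of a summand. -/
def SS.inc (ρ : K → W) (k : K) (y : YY (ρ k)) : SS ρ := ⟨⟨(k, ρ k), y⟩, rfl⟩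

lemma SS.inc_continuous (ρ : K → W) (k : K) : Continuous (SS.inc ρ k) :=
  (continuous_sigmaMk (σ := fun z : K × W => YY z.2) (i := (k, ρ k))).subtype_mk _

lemma SS.inc_inj (ρ : K → W) (k : K) : Function.Injective (SS.inc ρ k) := by
  intro x y h
  have := congrArg Subtype.val h
  exact eq_of_heq (Sigma.mk.inj this).2

lemma SS.inc_surj (ρ : K → W) (x : SS ρ) : ∃ k y, x = SS.inc ρ k y := by
  obtain ⟨⟨⟨k, w⟩, y⟩, h⟩ := x
  change w = ρ k at h
  subst h
  exact ⟨k, y, rfl⟩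

/-- special points -/
noncomputable def SS.pt (ρ : K → W) (k : K) : SS ρ := SS.inc ρ k (YY.pt _)

lemma SS.pt_inj (ρ : K → W) : Function.Injective (SS.pt ρ) := by
  intro k l h
  exact congrArg (fun z : SS ρ => z.1.1.1) h

open Classical in
/-- retraction -/
noncomputable def retr (i : K × W) (z : XX K W) : YY i.2 :=
  if h : z.1 = i then h ▸ z.2 else YY.pt _

lemma retr_continuous (i : K × W) : Continuous (retr i) := by
  refine continuous_sigma fun j => ?_
  by_cases h : j = i
  · subst h
    have : (fun a : YY j.2 => retr j ⟨j, a⟩) = id := by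
      funext a; simp [retr]
    rw [this]; exact continuous_id
  · have : (fun a : YY j.2 => retr i ⟨j, a⟩) = fun _ => YY.pt _ := by
      funext a; simp [retr, h]
    rw [this]; exact continuous_const

lemma retr_inc (ρ : K → W) (k : K) (y : YY (ρ k)) : retr (k, ρ k) (SS.inc ρ k y).1 = y := by
  simp [retr, SS.inc]

variable [WellFoundedLT W]

lemma SS.special_upper (ρ : K → W) (k : K) {y : SS ρ} (hy : y ∈ TT (SS.pt ρ k) (ρ k)) :
    y = SS.pt ρ k := by
  have hC : IsClopen {z : SS ρ | z.1.1 = (k, ρ k)} :=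
    (clopen_fst (fun z : K × W => z = (k, ρ k))).preimage continuous_subtype_val
  have h1 := TT_clopen hC (x := SS.pt ρ k) rfl hy
  have h2 := TT_map ((retr_continuous (k, ρ k)).comp (continuous_subtype_val (p := (· ∈ SS ρ)))) _ hy
  obtain ⟨l, z, rfl⟩ := SS.inc_surj ρ y
  have hl : l = k := congrArg Prod.fst h1
  subst hl
  simp only [Function.comp_apply, SS.pt, retr_inc] at h2
  have := YY.special_upper h2
  rw [this]; rfl

lemma SS.exists_ne (ρ : K → W) {k : K} {y : YY (ρ k)} {v : W} (h : ∃ z ∈ TT y v, z ≠ y) :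
    ∃ z ∈ TT (SS.inc ρ k y) v, z ≠ SS.inc ρ k y := by
  obtain ⟨z, hz, hne⟩ := h
  exact ⟨_, TT_map (SS.inc_continuous ρ k) v hz, fun h => hne (SS.inc_inj ρ k h)⟩

/-- Points with small iterated quasi-components are special. -/
lemma SS.eq_pt (ρ : K → W) {x : SS ρ} {v : W} (h : ∀ z ∈ TT x v, z = x) :
    ∃ k, x = SS.pt ρ k ∧ ρ k ≤ v := by
  obtain ⟨k, y, rfl⟩ := SS.inc_surj ρ x
  have hy : y = YY.pt _ := by
    by_contra hy
    obtain ⟨z, hz, hne⟩ := SS.exists_ne ρ (YY.nonspecial hy v)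
    exact hne (h z hz)
  subst hy
  refine ⟨k, rfl, ?_⟩
  by_contra hlt
  obtain ⟨z, hz, hne⟩ := SS.exists_ne ρ (YY.special_lower (not_le.1 hlt))
  exact hne (h z hz)

lemma SS.pull {ρ ρ' : K → W} {f : SS ρ → SS ρ'} (hf : Continuous f) (hb : Function.Bijective f) :
    ∃ g : K → K, (∀ k, f (SS.pt ρ (g k)) = SS.pt ρ' k) ∧ ∀ k, ρ (g k) ≤ ρ' k := by
  have : ∀ k, ∃ l, f (SS.pt ρ l) = SS.pt ρ' k ∧ ρ l ≤ ρ' k := by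
    intro k
    obtain ⟨x, hx⟩ := hb.2 (SS.pt ρ' k)
    obtain ⟨l, rfl, hl⟩ := SS.eq_pt ρ (x := x) (v := ρ' k) (fun z hz => by
      have := TT_map hf _ hz
      rw [hx] at this
      exact hb.1 ((SS.special_upper ρ' k this).trans hx.symm))
    exact ⟨l, hx, hl⟩
  choose g h1 h2 using this
  exact ⟨g, h1, h2⟩

lemma SS.homeo {ρ ρ' : K → W} (e : SS ρ ≃ₜ SS ρ') (k : K) : ∃ l, ρ' l = ρ k := by
  obtain ⟨g, hg, hg'⟩ := SS.pull e.continuous e.bijective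
  obtain ⟨g2, h2, h2'⟩ := SS.pull e.symm.continuous e.symm.bijective
  have : g (g2 k) = k := by
    apply SS.pt_inj ρ
    apply e.injective
    rw [hg, ← h2 k, e.apply_symm_apply]
  refine ⟨g2 k, le_antisymm (h2' k) ?_⟩
  have := hg' (g2 k)
  rwa [‹g (g2 k) = k›] at this

open Classical in
lemma SS.exists_map {ρ ρ' : K → W} (σ : K ≃ K) (h : ∀ k, ρ k ≤ ρ' (σ k)) :
    ∃ f : SS ρ → SS ρ', Continuous f ∧ Function.Bijective f := by
  let F : XX K W → XX K W := fun z =>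
    if z.1.2 = ρ z.1.1 then ⟨(σ z.1.1, ρ' (σ z.1.1)), (show GG W from z.2)⟩ else z
  have hF : Continuous F := by
    refine continuous_sigma fun j => ?_
    by_cases hj : j.2 = ρ j.1
    · have : (fun a : YY j.2 => F ⟨j, a⟩) =
          fun a => ⟨(σ j.1, ρ' (σ j.1)), (show GG W from a)⟩ := by
        funext a; simp [F, hj]
      rw [this]
      exact (continuous_sigmaMk (σ := fun z : K × W => YY z.2) (i := (σ j.1, ρ' (σ j.1)))).comp
        (YY.continuous_le (w := j.2) (w' := ρ' (σ j.1)) (hj ▸ h j.1))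
    · have : (fun a : YY j.2 => F ⟨j, a⟩) = fun a => ⟨j, a⟩ := by
        funext a; simp [F, hj]
      rw [this]
      exact continuous_sigmaMk (σ := fun z : K × W => YY z.2) (i := j)
  have hFi : ∀ k y, F (SS.inc ρ k y).1 = (SS.inc ρ' (σ k) (show GG W from y)).1 := by
    intro k y
    simp [F, SS.inc]
  have hm : ∀ z : SS ρ, F z.1 ∈ SS ρ' := by
    intro z
    obtain ⟨k, y, rfl⟩ := SS.inc_surj ρ z
    rw [hFi]; exact Subtype.property _
  have hFi' : ∀ k y, (⟨F (SS.inc ρ k y).1, hm _⟩ : SS ρ') = SS.inc ρ' (σ k) (show GG W from y) :=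
    fun k y => Subtype.ext (hFi k y)
  refine ⟨fun z => ⟨F z.1, hm z⟩, (hF.comp continuous_subtype_val).subtype_mk _, ?_, ?_⟩
  · intro a b hab
    obtain ⟨k, y, rfl⟩ := SS.inc_surj ρ a
    obtain ⟨l, z, rfl⟩ := SS.inc_surj ρ b
    simp only [hFi'] at hab
    have hkl : k = l := σ.injective (congrArg (fun z : SS ρ' => z.1.1.1) hab)
    subst hkl
    have := SS.inc_inj ρ' (σ k) hab
    exact congrArg (SS.inc ρ k) this
  · intro b
    obtain ⟨l, z, rfl⟩ := SS.inc_surj ρ' b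
    obtain ⟨k, rfl⟩ := σ.surjective l
    exact ⟨SS.inc ρ k (show GG W from z), hFi' k _⟩

end total

/-- Regressive injections of well-orders are trivial. -/
lemma regressive_id {J : Type u} [LinearOrder J] [WellFoundedLT J] (g : J → J)
    (hg : Function.Injective g) (h : ∀ j, g j ≤ j) (j : J) : g j = j := by
  induction j using WellFoundedLT.induction with
  | ind j ih =>
    rcases (h j).lt_or_eq with hlt | heq
    · exact absurd (hg (ih _ hlt)) hlt.ne
    · exact heq

lemma card_XX {K W : Type u} [LinearOrder W] {α : Cardinal.{u}} (hα : Cardinal.continuum ≤ α)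
    (hK : #K = α) (hW : #W = α) : #(XX K W) = α := by
  have h0 : ℵ₀ ≤ α := Cardinal.aleph0_le_continuum.trans hα
  have : Infinite W := Cardinal.infinite_iff.2 (hW ▸ h0)
  have hG : #(GG W) ≤ α := by
    refine (Cardinal.mk_subtype_le _).trans ?_
    rw [Cardinal.mk_prod]
    have h1 : #(Option (W × ℕ)) = α := by
      simp [Cardinal.mk_option, hW, Cardinal.mul_aleph0_eq h0, Cardinal.add_one_eq h0]
    have h2 : #(EE W) ≤ α := card_EE.trans (by rw [hW]; exact max_le le_rfl hα)
    simp only [Cardinal.lift_id, h1]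
    exact (mul_le_mul_right h2 α).trans_eq (Cardinal.mul_eq_self h0)
  apply le_antisymm
  · let F : XX K W → (K × W) × GG W := fun z => (z.1, z.2)
    have hF : Function.Injective F := by
      rintro ⟨i, a⟩ ⟨j, b⟩ h
      have h1 : i = j := congrArg Prod.fst h
      subst h1
      have h2 : a = b := congrArg Prod.snd h
      rw [h2]
    refine (Cardinal.mk_le_of_injective hF).trans ?_
    simp only [Cardinal.mk_prod, Cardinal.lift_id, hK, hW, Cardinal.mul_eq_self h0]
    exact (mul_le_mul_right hG α).trans_eq (Cardinal.mul_eq_self h0)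
  · obtain ⟨w⟩ : Nonempty W := inferInstance
    rw [← hK]
    refine Cardinal.mk_le_of_injective (f := fun k : K => (⟨(k, w), YY.pt w⟩ : XX K W)) ?_
    intro k l h
    exact congrArg (fun z : XX K W => z.1.1) h

/-- rank type -/
abbrev RR (J : Type u) : Type u := ℕ ×ₗ (J ×ₗ Bool)

open Classical in
/-- ranks -/
noncomputable def rho {J Q : Type u} (j0 : J) (ι : Q → J) (le : Q → Q → Prop) (q : Q) :
    J ⊕ ULift.{u} ℤ → RR J
  | Sum.inl i => toLex (0, toLex (i, decide (∃ p, ι p = i ∧ le p q)))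
  | Sum.inr n => if n.down < 0 then toLex (1, toLex (j0, false)) else
      if n.down = 0 then toLex (2, toLex (ι q, false)) else toLex (3, toLex (j0, false))

lemma rr_fst {J : Type u} [LinearOrder J] {m m' : ℕ} {a a' : J ×ₗ Bool}
    (h : (toLex (m, a) : RR J) ≤ toLex (m', a')) : m ≤ m' := by
  rw [Prod.Lex.le_iff] at h
  rcases h with h | h
  · exact h.le
  · exact h.1.le

lemma rr_lt {J : Type u} [LinearOrder J] {m m' : ℕ} {a a' : J ×ₗ Bool} (h : m < m') :
    (toLex (m, a) : RR J) ≤ toLex (m', a') := by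
  rw [Prod.Lex.le_iff]; exact Or.inl h

open Classical in
lemma main_aux {J : Type u} [LinearOrder J] [WellFoundedLT J] (j0 : J) {Q : Type u}
    (le : Q → Q → Prop) (ι : Q → J) (hι : Function.Injective ι) (hr : ∀ q, le q q)
    (ht : ∀ a b c, le a b → le b c → le a c) :
    ∃ Xq : Q → Set (XX (J ⊕ ULift.{u} ℤ) (RR J)),
      (∀ q, IsClopen (Xq q)) ∧
      (∀ q q', q ≠ q' → IsEmpty ((Xq q) ≃ₜ (Xq q'))) ∧
      (∀ q q', le q q' ↔
        ∃ f : (Xq q) → (Xq q'), Continuous f ∧ Function.Bijective f) := by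
  refine ⟨fun q => SS (rho j0 ι le q), fun q => SS_clopen _, ?_, ?_⟩
  · intro q q' hne
    refine ⟨fun e => hne ?_⟩
    obtain ⟨l, hl⟩ := SS.homeo e (Sum.inr ⟨0⟩)
    have h0 : rho j0 ι le q (Sum.inr ⟨0⟩) = toLex (2, toLex (ι q, false)) := by simp [rho]
    rw [h0] at hl
    rcases l with i | n
    · have := congrArg (fun z : RR J => (ofLex z).1) hl
      simp [rho] at this
    · simp only [rho] at hl
      split_ifs at hl
      · have := congrArg (fun z : RR J => (ofLex z).1) hl
        simp at this
      · have := congrArg (fun z : RR J => (ofLex (ofLex z).2).1) hl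
        exact (hι this).symm
      · have := congrArg (fun z : RR J => (ofLex z).1) hl
        simp at this
  · intro q q'
    constructor
    · intro hle
      let sh : ULift.{u} ℤ ≃ ULift.{u} ℤ :=
        Equiv.ulift.trans ((Equiv.addRight (1 : ℤ)).trans Equiv.ulift.symm)
      refine SS.exists_map (Equiv.sumCongr (Equiv.refl J) sh) ?_
      rintro (i | n)
      · change rho j0 ι le q (Sum.inl i) ≤ rho j0 ι le q' (Sum.inl i)
        simp only [rho, Prod.Lex.toLex_le_toLex, lt_irrefl, false_or, true_and]
        by_cases h : ∃ p, ι p = i ∧ le p q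
        · have h' : ∃ p, ι p = i ∧ le p q' := by
            obtain ⟨p, hp, hpq⟩ := h
            exact ⟨p, hp, ht _ _ _ hpq hle⟩
          simp [h, h']
        · simp [h]
      · obtain ⟨n, rfl⟩ : ∃ m : ℤ, n = ULift.up m := ⟨n.down, rfl⟩
        change rho j0 ι le q (Sum.inr ⟨n⟩) ≤ rho j0 ι le q' (Sum.inr ⟨n + 1⟩)
        simp only [rho]
        rcases lt_trichotomy n (-1) with h | h | h
        · rw [if_pos (by omega), if_pos (by omega)]
        · subst h
          simp only [Int.reduceNeg, Int.reduceLT, if_true, Int.reduceAdd, lt_irrefl, if_false]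
          exact rr_lt (by norm_num)
        · rw [if_neg (by omega : ¬ n < 0), if_neg (by omega : ¬ n + 1 < 0),
            if_neg (by omega : ¬ n + 1 = 0)]
          split_ifs
          · exact rr_lt (by norm_num)
          · exact le_rfl
    · rintro ⟨f, hf, hb⟩
      obtain ⟨g, hg, hle⟩ := SS.pull hf hb
      have hginj : Function.Injective g := by
        intro k l h
        apply SS.pt_inj (rho j0 ι le q')
        rw [← hg, ← hg, h]
      have hlow : ∀ i : J, ∃ i' : J, g (Sum.inl i) = Sum.inl i' := by
        intro i
        rcases hgi : g (Sum.inl i) with i' | n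
        · exact ⟨i', rfl⟩
        · have := hle (Sum.inl i)
          rw [hgi] at this
          simp only [rho] at this
          split_ifs at this
          all_goals
            have := rr_fst this
            omega
      choose g' hg' using hlow
      have hle' : ∀ i, g' i < i ∨ g' i = i ∧
          decide (∃ p, ι p = g' i ∧ le p q) ≤ decide (∃ p, ι p = i ∧ le p q') := by
        intro i
        have := hle (Sum.inl i)
        rw [hg'] at this
        simpa only [rho, Prod.Lex.toLex_le_toLex, lt_irrefl, false_or, true_and] using this
      have hid := regressive_id g' (fun a b h => by
        have := hginj ((hg' a).trans ((congrArg Sum.inl h).trans (hg' b).symm))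
        exact Sum.inl.inj this) (fun i => by
          rcases hle' i with h | h
          · exact h.le
          · exact h.1.le)
      have h := (hle' (ι q)).resolve_left (by rw [hid]; exact lt_irrefl _)
      have h2 := h.2
      rw [hid] at h2
      have h3 : ∃ p, ι p = ι q ∧ le p q := ⟨q, rfl, hr q⟩
      have h4 : ∃ p, ι p = ι q ∧ le p q' := by
        by_contra hn
        rw [decide_eq_true h3, decide_eq_false hn] at h2
        exact absurd h2 (by decide)
      obtain ⟨p, hp, hpq⟩ := h4
      rw [← hι hp]
      exact hpq

theorem statement2 (α : Cardinal.{u}) (hα : Cardinal.continuum ≤ α) :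
    ∃ (X : Type u) (tX : TopologicalSpace X),
      @TopologicalSpace.MetrizableSpace X tX ∧ #X = α ∧
      @RepresentsByContBij α X tX := by
  have h0 : ℵ₀ ≤ α := Cardinal.aleph0_le_continuum.trans hα
  let J : Type u := α.ord.ToType
  have hJ : #J = α := by simp [J]
  have hJne : Nonempty J := by
    rw [← Cardinal.mk_ne_zero_iff, hJ]
    exact (Cardinal.aleph0_pos.trans_le h0).ne'
  obtain ⟨j0⟩ := hJne
  refine ⟨XX (J ⊕ ULift.{u} ℤ) (RR J), inferInstance, sigma_metrizable, card_XX hα ?_ ?_, ?_⟩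
  · simp [hJ, Cardinal.add_eq_left h0 h0]
  · change #(ℕ × (J × Bool)) = α
    have h2 : α * 2 = α := Cardinal.mul_eq_left h0
      ((Cardinal.natCast_lt_aleph0 (n := 2)).le.trans h0) two_ne_zero
    simp [hJ, h2, Cardinal.aleph0_mul_eq h0]
  · intro Q le hQ hr ht
    rw [← hJ] at hQ
    obtain ⟨ι⟩ := hQ
    exact main_aux j0 le ι ι.injective hr ht
end
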